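/- arXiv:1603.07113 — 2 statements merged into one kernel-verified Lean document; each statement's English description precedes it below -/
import Mathlib

section
/- Let λ be a real number with 0 < λ ≤ 6/7. If f is a close-to-convex function on the unit disk with Taylor coefficients a_k, then |λ a_3² − a_5| ≤ 5. -/
open Complex Metric

/-- The k-th Taylor coefficient of `f` at `0`: `a_k = f^{(k)}(0)/k!`. -/
noncomputable def taylorCoeff (f : ℂ → ℂ) (k : ℕ) : ℂ :=
  iteratedDeriv k f 0 / (Nat.factorial k)

/-- `g` is a (normalized) starlike function on the unit disk. -/
def IsStarlikeFn (g : ℂ → ℂ) : Prop :=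
  DifferentiableOn ℂ g (ball (0 : ℂ) 1) ∧ g 0 = 0 ∧ deriv g 0 = 1 ∧
    ∀ z ∈ ball (0 : ℂ) 1 \ {0}, 0 < (z * deriv g z / g z).re

/-- `f` is a (normalized) close-to-convex function on the unit disk. -/
def IsCloseToConvex (f : ℂ → ℂ) : Prop :=
  DifferentiableOn ℂ f (ball (0 : ℂ) 1) ∧ f 0 = 0 ∧ deriv f 0 = 1 ∧
    ∃ θ : ℝ, ∃ g : ℂ → ℂ, IsStarlikeFn g ∧
      ∀ z ∈ ball (0 : ℂ) 1 \ {0},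
        0 < (Complex.exp (θ * Complex.I) * z * deriv f z / g z).re


open MeasureTheory

/-- Truncated sequences of coefficients of degree 0 to 4. -/
abbrev CoefVec := Fin 5 → ℂ

/-- The moment curve. -/
def momVec (y : ℂ) : CoefVec := ![1, y, y ^ 2, y ^ 3, y ^ 4]

/-- Truncated product of power series. -/
def tmul (c d : CoefVec) : CoefVec :=
  ![c 0 * d 0,
    c 0 * d 1 + c 1 * d 0,
    c 0 * d 2 + c 1 * d 1 + c 2 * d 0,
    c 0 * d 3 + c 1 * d 2 + c 2 * d 1 + c 3 * d 0,
    c 0 * d 4 + c 1 * d 3 + c 2 * d 2 + c 3 * d 1 + c 4 * d 0]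

/-- Coefficients of `exp (∑ P k z^k / k)`. -/
noncomputable def expVec (P : CoefVec) : CoefVec :=
  ![1, P 1, (P 1 ^ 2 + P 2) / 2, (P 1 ^ 3 + 3 * P 1 * P 2 + 2 * P 3) / 6,
    (P 1 ^ 4 + 6 * P 1 ^ 2 * P 2 + 3 * P 2 ^ 2 + 8 * P 1 * P 3 + 6 * P 4) / 24]

/-- Coefficients of `(1 - y z)^(-a)`. -/
noncomputable def powVec (a : ℝ) (y : ℂ) : CoefVec :=
  ![1, a * y, a * (a + 1) / 2 * y ^ 2, a * (a + 1) * (a + 2) / 6 * y ^ 3,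
    a * (a + 1) * (a + 2) * (a + 3) / 24 * y ^ 4]

/-- Closed convex hull of the coefficient vectors of `(1 - y z)^(-a)`. -/
def hullSet (a : ℝ) : Set CoefVec := closedConvexHull ℝ (powVec a '' closedBall (0 : ℂ) 1)

/-- Closed convex hull of the moment curve. -/
def momHull : Set CoefVec := closedConvexHull ℝ (momVec '' closedBall (0 : ℂ) 1)

lemma expVec_add (P Q : CoefVec) : expVec (P + Q) = tmul (expVec P) (expVec Q) := by
  ext k; fin_cases k <;> simp [expVec, tmul] <;> ring

lemma expVec_smul (a : ℝ) (y : ℂ) : expVec (a • momVec y) = powVec a y := by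
  ext k; fin_cases k <;> simp [expVec, momVec, powVec] <;> ring

lemma powVec_one (y : ℂ) : powVec 1 y = momVec y := by
  ext k; fin_cases k <;> simp [momVec, powVec] <;> norm_num

lemma tmul_comm (c d : CoefVec) : tmul c d = tmul d c := by
  ext k; fin_cases k <;> simp [tmul] <;> ring

lemma tmul_linear (d : CoefVec) : IsLinearMap ℝ (fun c => tmul c d) where
  map_add x y := by ext k; fin_cases k <;> simp [tmul] <;> ring
  map_smul r x := by ext k; fin_cases k <;> simp [tmul] <;> ring

lemma continuous_of_linear {f : CoefVec → CoefVec} (hf : IsLinearMap ℝ f) : Continuous f :=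
  (hf.mk' f).continuous_of_finiteDimensional

lemma expVec_continuous : Continuous expVec := by
  refine continuous_pi fun k => ?_
  fin_cases k <;> simp [expVec] <;> fun_prop

/-- Linear maps send a closed hull into a closed convex set if they do so on generators. -/
lemma hull_map {s : Set CoefVec} {t : Set CoefVec} {f : CoefVec → CoefVec}
    (hf : IsLinearMap ℝ f) (ht : Convex ℝ t) (htc : IsClosed t) (h : ∀ x ∈ s, f x ∈ t)
    {x : CoefVec} (hx : x ∈ closedConvexHull ℝ s) : f x ∈ t :=
  closedConvexHull_min (t := f ⁻¹' t) h (ht.is_linear_preimage hf)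
    (htc.preimage (continuous_of_linear hf)) hx

lemma beta_moment_one {a b : ℝ} (ha : 0 < a) (hb : 0 < b) :
    Integrable (ProbabilityTheory.betaPDFReal a b) ∧
    ∫ x, ProbabilityTheory.betaPDFReal a b x = 1 := by
  have h := ProbabilityTheory.lintegral_betaPDF_eq_one ha hb
  have hnn : ∀ x, 0 ≤ ProbabilityTheory.betaPDFReal a b x := by
    intro x
    by_cases hx : 0 < x ∧ x < 1
    · exact (ProbabilityTheory.betaPDFReal_pos hx.1 hx.2 ha hb).le
    · simp [ProbabilityTheory.betaPDFReal, hx]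
  constructor
  · refine ⟨(ProbabilityTheory.measurable_betaPDFReal a b).aestronglyMeasurable, ?_⟩
    rw [hasFiniteIntegral_iff_ofReal (Filter.Eventually.of_forall hnn)]
    change ∫⁻ x, ProbabilityTheory.betaPDF a b x < _
    rw [h]; simp
  · rw [integral_eq_lintegral_of_nonneg_ae (Filter.Eventually.of_forall hnn)
      (ProbabilityTheory.measurable_betaPDFReal a b).aestronglyMeasurable]
    change (∫⁻ x, ProbabilityTheory.betaPDF a b x).toReal = _
    rw [h]; simp

lemma beta_shift {a b : ℝ} (ha : 0 < a) (hb : 0 < b) (x : ℝ) :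
    x * ProbabilityTheory.betaPDFReal a b x
      = a / (a + b) * ProbabilityTheory.betaPDFReal (a + 1) b x := by
  by_cases hx : 0 < x ∧ x < 1
  · simp only [ProbabilityTheory.betaPDFReal, hx, and_self, if_true, ProbabilityTheory.beta]
    have e1 : x ^ (a + 1 - 1) = x ^ (a - 1) * x := by
      rw [← Real.rpow_add_one hx.1.ne']; ring_nf
    have e2 : a + 1 + b = (a + b) + 1 := by ring
    rw [e1, e2, Real.Gamma_add_one ha.ne', Real.Gamma_add_one (by positivity)]
    have := (Real.Gamma_pos_of_pos ha).ne'
    have := (Real.Gamma_pos_of_pos hb).ne'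
    have := (Real.Gamma_pos_of_pos (add_pos ha hb)).ne'
    field_simp
  · simp [ProbabilityTheory.betaPDFReal, hx]

/-- Existence of a probability measure on the unit interval with the moments of the
beta distribution. -/
lemma beta_moments {a b : ℝ} (ha : 0 < a) (hb : 0 < b) :
    ∃ μ : Measure ℝ, IsProbabilityMeasure μ ∧ (∀ᵐ t ∂μ, t ∈ Set.Icc (0 : ℝ) 1) ∧
      (∫ t, t ∂μ = a / (a + b)) ∧
      (∫ t, t ^ 2 ∂μ = a * (a + 1) / ((a + b) * (a + b + 1))) ∧
      (∫ t, t ^ 3 ∂μ = a * (a + 1) * (a + 2) / ((a + b) * (a + b + 1) * (a + b + 2))) ∧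
      (∫ t, t ^ 4 ∂μ = a * (a + 1) * (a + 2) * (a + 3)
        / ((a + b) * (a + b + 1) * (a + b + 2) * (a + b + 3))) := by
  have hmeas : Measurable (ProbabilityTheory.betaPDF a b) :=
    (ProbabilityTheory.measurable_betaPDFReal a b).ennreal_ofReal
  have hnn : ∀ x, 0 ≤ ProbabilityTheory.betaPDFReal a b x := by
    intro x
    by_cases hx : 0 < x ∧ x < 1
    · exact (ProbabilityTheory.betaPDFReal_pos hx.1 hx.2 ha hb).le
    · simp [ProbabilityTheory.betaPDFReal, hx]
  have hInt : ∀ g : ℝ → ℝ, ∫ t, g t ∂(ProbabilityTheory.betaMeasure a b)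
      = ∫ t, g t * ProbabilityTheory.betaPDFReal a b t := by
    intro g
    rw [ProbabilityTheory.betaMeasure, integral_withDensity_eq_integral_toReal_smul hmeas
      (Filter.Eventually.of_forall fun x => by simp [ProbabilityTheory.betaPDF])]
    congr 1; ext t
    rw [ProbabilityTheory.betaPDF, ENNReal.toReal_ofReal (hnn t), smul_eq_mul, mul_comm]
  have s1 := beta_shift ha hb
  have s2 := beta_shift (a := a + 1) (by positivity) hb
  have s3 := beta_shift (a := a + 1 + 1) (by positivity) hb
  have s4 := beta_shift (a := a + 1 + 1 + 1) (by positivity) hb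
  refine ⟨ProbabilityTheory.betaMeasure a b, ProbabilityTheory.isProbabilityMeasureBeta ha hb,
    ?_, ?_, ?_, ?_, ?_⟩
  · rw [ProbabilityTheory.betaMeasure, ae_withDensity_iff hmeas]
    refine Filter.Eventually.of_forall fun x hx => ?_
    by_contra hx'
    apply hx
    have : ¬ (0 < x ∧ x < 1) := fun h => hx' ⟨h.1.le, h.2.le⟩
    simp [ProbabilityTheory.betaPDF, ProbabilityTheory.betaPDFReal, this]
  · rw [hInt]
    simp_rw [s1]
    rw [integral_const_mul, (beta_moment_one (a := a + 1) (by positivity) hb).2]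
    field_simp
  · rw [hInt]
    have : ∀ t : ℝ, t ^ 2 * ProbabilityTheory.betaPDFReal a b t =
        (a / (a + b) * ((a + 1) / (a + 1 + b)))
          * ProbabilityTheory.betaPDFReal (a + 1 + 1) b t := by
      intro t
      linear_combination t * s1 t + a / (a + b) * s2 t
    simp_rw [this]
    rw [integral_const_mul, (beta_moment_one (a := a + 1 + 1) (by positivity) hb).2]
    field_simp
    ring
  · rw [hInt]
    have : ∀ t : ℝ, t ^ 3 * ProbabilityTheory.betaPDFReal a b t =
        (a / (a + b) * ((a + 1) / (a + 1 + b)) * ((a + 1 + 1) / (a + 1 + 1 + b)))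
          * ProbabilityTheory.betaPDFReal (a + 1 + 1 + 1) b t := by
      intro t
      linear_combination t ^ 2 * s1 t + t * (a / (a + b)) * s2 t
        + (a / (a + b) * ((a + 1) / (a + 1 + b))) * s3 t
    simp_rw [this]
    rw [integral_const_mul, (beta_moment_one (a := a + 1 + 1 + 1) (by positivity) hb).2]
    field_simp
    ring
  · rw [hInt]
    have : ∀ t : ℝ, t ^ 4 * ProbabilityTheory.betaPDFReal a b t =
        (a / (a + b) * ((a + 1) / (a + 1 + b)) * ((a + 1 + 1) / (a + 1 + 1 + b))
          * ((a + 1 + 1 + 1) / (a + 1 + 1 + 1 + b)))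
          * ProbabilityTheory.betaPDFReal (a + 1 + 1 + 1 + 1) b t := by
      intro t
      linear_combination t ^ 3 * s1 t + t ^ 2 * (a / (a + b)) * s2 t
        + t * (a / (a + b) * ((a + 1) / (a + 1 + b))) * s3 t
        + (a / (a + b) * ((a + 1) / (a + 1 + b)) * ((a + 1 + 1) / (a + 1 + 1 + b))) * s4 t
    simp_rw [this]
    rw [integral_const_mul, (beta_moment_one (a := a + 1 + 1 + 1 + 1) (by positivity) hb).2]
    field_simp
    ring

lemma powVec_mem {a : ℝ} {y : ℂ} (hy : ‖y‖ ≤ 1) : powVec a y ∈ hullSet a :=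
  subset_closedConvexHull ⟨y, by simpa using hy, rfl⟩

lemma tmul_pow_mem_pos {a b : ℝ} (ha : 0 < a) (hb : 0 < b) {y w : ℂ} (hy : ‖y‖ ≤ 1)
    (hw : ‖w‖ ≤ 1) : tmul (powVec a y) (powVec b w) ∈ hullSet (a + b) := by
  obtain ⟨μ, hμ, hae, m1, m2, m3, m4⟩ := beta_moments ha hb
  have hpi : ∀ n : ℕ, Integrable (fun t : ℝ => (t : ℂ) ^ n) μ := by
    intro n
    refine Integrable.of_bound (by fun_prop) 1 ?_
    filter_upwards [hae] with t ht
    rw [norm_pow, Complex.norm_real, Real.norm_eq_abs, abs_of_nonneg ht.1]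
    exact pow_le_one₀ ht.1 ht.2
  have hmem : ∀ᵐ t : ℝ ∂μ, powVec (a + b) (w + t * (y - w)) ∈ hullSet (a + b) := by
    filter_upwards [hae] with t ht
    apply powVec_mem
    have : w + t * (y - w) = ((1 - t : ℝ) : ℂ) * w + (t : ℂ) * y := by push_cast; ring
    rw [this]
    refine (norm_add_le _ _).trans ?_
    rw [norm_mul, norm_mul, Complex.norm_real, Complex.norm_real, Real.norm_eq_abs,
      Real.norm_eq_abs, abs_of_nonneg ht.1, abs_of_nonneg (by linarith [ht.2])]
    nlinarith [ht.1, ht.2]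
  have i1 := hpi 1
  have i2 := hpi 2
  have i3 := hpi 3
  have i4 := hpi 4
  simp only [pow_one] at i1
  have e1 : ∀ t : ℝ, (w + t * (y - w)) = w + (t : ℂ) * (y - w) := fun t => rfl
  have e2 : ∀ t : ℝ, (w + t * (y - w)) ^ 2 =
      w ^ 2 + (t : ℂ) * (2 * w * (y - w)) + (t : ℂ) ^ 2 * (y - w) ^ 2 := fun t => by ring
  have e3 : ∀ t : ℝ, (w + t * (y - w)) ^ 3 =
      w ^ 3 + (t : ℂ) * (3 * w ^ 2 * (y - w)) + (t : ℂ) ^ 2 * (3 * w * (y - w) ^ 2)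
        + (t : ℂ) ^ 3 * (y - w) ^ 3 := fun t => by ring
  have e4 : ∀ t : ℝ, (w + t * (y - w)) ^ 4 =
      w ^ 4 + (t : ℂ) * (4 * w ^ 3 * (y - w)) + (t : ℂ) ^ 2 * (6 * w ^ 2 * (y - w) ^ 2)
        + (t : ℂ) ^ 3 * (4 * w * (y - w) ^ 3) + (t : ℂ) ^ 4 * (y - w) ^ 4 := fun t => by ring
  have c1 : ∫ t : ℝ, (t : ℂ) ∂μ = ((a / (a + b) : ℝ) : ℂ) := by
    rw [← m1]; exact integral_ofReal
  have c2 : ∫ t : ℝ, (t : ℂ) ^ 2 ∂μ = ((a * (a + 1) / ((a + b) * (a + b + 1)) : ℝ) : ℂ) := by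
    rw [← m2, ← integral_complex_ofReal]; simp
  have c3 : ∫ t : ℝ, (t : ℂ) ^ 3 ∂μ = ((a * (a + 1) * (a + 2)
      / ((a + b) * (a + b + 1) * (a + b + 2)) : ℝ) : ℂ) := by
    rw [← m3, ← integral_complex_ofReal]; simp
  have c4 : ∫ t : ℝ, (t : ℂ) ^ 4 ∂μ = ((a * (a + 1) * (a + 2) * (a + 3)
      / ((a + b) * (a + b + 1) * (a + b + 2) * (a + b + 3)) : ℝ) : ℂ) := by
    rw [← m4, ← integral_complex_ofReal]; simp
  have j0 : ∀ c : ℂ, Integrable (fun _ : ℝ => c) μ := fun c => integrable_const c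
  have j1 := fun c : ℂ => i1.mul_const c
  have j2 := fun c : ℂ => i2.mul_const c
  have j3 := fun c : ℂ => i3.mul_const c
  have j4 := fun c : ℂ => i4.mul_const c
  have k1 : ∀ c d : ℂ, Integrable (fun t : ℝ => c + (t : ℂ) * d) μ :=
    fun c d => (j0 c).add (j1 d)
  have k2 : ∀ c d e : ℂ, Integrable (fun t : ℝ => c + (t : ℂ) * d + (t : ℂ) ^ 2 * e) μ :=
    fun c d e => (k1 c d).add (j2 e)
  have k3 : ∀ c d e f : ℂ, Integrable
      (fun t : ℝ => c + (t : ℂ) * d + (t : ℂ) ^ 2 * e + (t : ℂ) ^ 3 * f) μ :=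
    fun c d e f => (k2 c d e).add (j3 f)
  have k4 : ∀ c d e f g : ℂ, Integrable
      (fun t : ℝ => c + (t : ℂ) * d + (t : ℂ) ^ 2 * e + (t : ℂ) ^ 3 * f + (t : ℂ) ^ 4 * g) μ :=
    fun c d e f g => (k3 c d e f).add (j4 g)
  have g1 : ∀ c d : ℂ, ∫ t : ℝ, (c + (t : ℂ) * d) ∂μ
      = c + ((a / (a + b) : ℝ) : ℂ) * d := by
    intro c d
    rw [integral_add (j0 c) (j1 d), integral_mul_const, c1]; simp
  have g2 : ∀ c d e : ℂ, ∫ t : ℝ, (c + (t : ℂ) * d + (t : ℂ) ^ 2 * e) ∂μ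
      = c + ((a / (a + b) : ℝ) : ℂ) * d
        + ((a * (a + 1) / ((a + b) * (a + b + 1)) : ℝ) : ℂ) * e := by
    intro c d e
    rw [integral_add (k1 c d) (j2 e), integral_mul_const, c2, g1]
  have g3 : ∀ c d e f : ℂ, ∫ t : ℝ, (c + (t : ℂ) * d + (t : ℂ) ^ 2 * e + (t : ℂ) ^ 3 * f) ∂μ
      = c + ((a / (a + b) : ℝ) : ℂ) * d
        + ((a * (a + 1) / ((a + b) * (a + b + 1)) : ℝ) : ℂ) * e
        + ((a * (a + 1) * (a + 2) / ((a + b) * (a + b + 1) * (a + b + 2)) : ℝ) : ℂ) * f := by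
    intro c d e f
    rw [integral_add (k2 c d e) (j3 f), integral_mul_const, c3, g2]
  have g4 : ∀ c d e f g : ℂ, ∫ t : ℝ, (c + (t : ℂ) * d + (t : ℂ) ^ 2 * e + (t : ℂ) ^ 3 * f
        + (t : ℂ) ^ 4 * g) ∂μ
      = c + ((a / (a + b) : ℝ) : ℂ) * d
        + ((a * (a + 1) / ((a + b) * (a + b + 1)) : ℝ) : ℂ) * e
        + ((a * (a + 1) * (a + 2) / ((a + b) * (a + b + 1) * (a + b + 2)) : ℝ) : ℂ) * f
        + ((a * (a + 1) * (a + 2) * (a + 3)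
      / ((a + b) * (a + b + 1) * (a + b + 2) * (a + b + 3)) : ℝ) : ℂ) * g := by
    intro c d e f g
    rw [integral_add (k3 c d e f) (j4 g), integral_mul_const, c4, g3]
  have hcomp : ∀ k : Fin 5,
      Integrable (fun t : ℝ => powVec (a + b) (w + t * (y - w)) k) μ := by
    intro k
    fin_cases k
    · simp [powVec]
    · simp only [powVec]
      exact (k1 _ _).const_mul _
    · simp only [powVec]
      refine Integrable.const_mul ?_ _
      exact (k2 _ _ _).congr (Filter.Eventually.of_forall fun t => (e2 t).symm)
    · simp only [powVec]
      refine Integrable.const_mul ?_ _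
      exact (k3 _ _ _ _).congr (Filter.Eventually.of_forall fun t => (e3 t).symm)
    · simp only [powVec]
      refine Integrable.const_mul ?_ _
      exact (k4 _ _ _ _ _).congr (Filter.Eventually.of_forall fun t => (e4 t).symm)
  have hI : Integrable (fun t : ℝ => powVec (a + b) (w + t * (y - w))) μ :=
    Integrable.of_eval hcomp
  have hmain : (∫ t : ℝ, powVec (a + b) (w + t * (y - w)) ∂μ) ∈ hullSet (a + b) :=
    Convex.integral_mem (s := hullSet (a + b)) convex_closedConvexHull
      isClosed_closedConvexHull hmem hI
  convert hmain using 1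
  have ca : (a : ℂ) ≠ 0 := by exact_mod_cast ha.ne'
  have h0 : (a : ℂ) + b ≠ 0 := by exact_mod_cast (by positivity : a + b ≠ 0)
  have h1 : (a : ℂ) + b + 1 ≠ 0 := by exact_mod_cast (by positivity : a + b + 1 ≠ 0)
  have h2 : (a : ℂ) + b + 2 ≠ 0 := by exact_mod_cast (by positivity : a + b + 2 ≠ 0)
  have h3 : (a : ℂ) + b + 3 ≠ 0 := by exact_mod_cast (by positivity : a + b + 3 ≠ 0)
  ext k
  rw [eval_integral hcomp]
  fin_cases k
  · simp [powVec, tmul]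
  · simp [powVec, tmul]
    rw [integral_const_mul, g1]
    push_cast
    field_simp
    ring
  · simp [powVec, tmul]
    simp_rw [e2]
    rw [integral_const_mul, g2]
    push_cast
    field_simp
    ring
  · simp [powVec, tmul]
    simp_rw [e3]
    rw [integral_const_mul, g3]
    push_cast
    field_simp
    ring
  · simp [powVec, tmul]
    simp_rw [e4]
    rw [integral_const_mul, g4]
    push_cast
    field_simp
    ring

lemma powVec_zero (y : ℂ) : powVec 0 y = ![1, 0, 0, 0, 0] := by
  ext k; fin_cases k <;> simp [powVec]

lemma tmul_unit (c : CoefVec) : tmul c ![1, 0, 0, 0, 0] = c := by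
  ext k; fin_cases k <;> simp [tmul]

lemma tmul_pow_mem {a b : ℝ} (ha : 0 ≤ a) (hb : 0 ≤ b) {y w : ℂ} (hy : ‖y‖ ≤ 1)
    (hw : ‖w‖ ≤ 1) : tmul (powVec a y) (powVec b w) ∈ hullSet (a + b) := by
  rcases ha.eq_or_lt with rfl | ha
  · rw [powVec_zero, tmul_comm, tmul_unit, zero_add]; exact powVec_mem hw
  rcases hb.eq_or_lt with rfl | hb
  · rw [powVec_zero, tmul_unit, add_zero]; exact powVec_mem hy
  exact tmul_pow_mem_pos ha hb hy hw

lemma tmul_mem {a b : ℝ} (ha : 0 ≤ a) (hb : 0 ≤ b) {c d : CoefVec} (hc : c ∈ hullSet a)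
    (hd : d ∈ hullSet b) : tmul c d ∈ hullSet (a + b) := by
  refine hull_map (tmul_linear d) convex_closedConvexHull isClosed_closedConvexHull ?_ hc
  rintro _ ⟨y, hy, rfl⟩
  rw [tmul_comm]
  refine hull_map (tmul_linear (powVec a y)) convex_closedConvexHull
    isClosed_closedConvexHull ?_ hd
  rintro _ ⟨w, hw, rfl⟩
  rw [tmul_comm]
  exact tmul_pow_mem ha hb (by simpa using hy) (by simpa using hw)

lemma expVec_sum_mem {ι : Type*} (s : Finset ι) (α : ι → ℝ) (y : ι → ℂ)
    (hα : ∀ i, 0 ≤ α i) (hy : ∀ i, ‖y i‖ ≤ 1) :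
    expVec (∑ i ∈ s, α i • momVec (y i)) ∈ hullSet (∑ i ∈ s, α i) := by
  classical
  induction s using Finset.induction_on with
  | empty =>
    have : expVec 0 = powVec 0 0 := by
      rw [powVec_zero]; ext k; fin_cases k <;> simp [expVec]
    simp only [Finset.sum_empty]
    rw [this]; exact powVec_mem (by simp)
  | insert i s hi ih =>
    rw [Finset.sum_insert hi, Finset.sum_insert hi, expVec_add, expVec_smul]
    exact tmul_mem (hα i) (Finset.sum_nonneg fun j _ => hα j) (powVec_mem (hy i)) ih

lemma expVec_mem {P : CoefVec} (hP : P ∈ momHull) : expVec ((2 : ℝ) • P) ∈ hullSet 2 := by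
  rw [momHull, closedConvexHull_eq_closure_convexHull] at hP
  have hcl : IsClosed {P : CoefVec | expVec ((2 : ℝ) • P) ∈ hullSet 2} :=
    IsClosed.preimage (f := fun P : CoefVec => expVec ((2 : ℝ) • P))
      (expVec_continuous.comp (continuous_const_smul _)) isClosed_closedConvexHull
  refine closure_minimal ?_ hcl hP
  intro Q hQ
  obtain ⟨ι, _, w, z, hw0, hw1, hz, rfl⟩ := mem_convexHull_iff_exists_fintype.1 hQ
  choose y hy hyz using hz
  have := expVec_sum_mem Finset.univ (fun i => 2 * w i) y
    (fun i => by have := hw0 i; positivity) (fun i => by simpa using hy i)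
  rw [← Finset.mul_sum, hw1, mul_one] at this
  change expVec _ ∈ hullSet 2
  rw [Finset.smul_sum]
  convert this using 3
  rename_i i _
  rw [← hyz i, smul_smul]

open ComplexConjugate

lemma sphere_sub_ball {r : ℝ} (h1 : r < 1) : sphere (0 : ℂ) r ⊆ ball (0 : ℂ) 1 := by
  intro z hz
  simp only [mem_sphere_iff_norm, sub_zero] at hz
  simp [hz, h1]

lemma avg_conj_pow {h : ℂ → ℂ} (hd : DifferentiableOn ℂ h (ball (0 : ℂ) 1)) {r : ℝ}
    (h0 : 0 < r) (h1 : r < 1) (k : ℕ) :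
    Real.circleAverage (fun z => conj z ^ k * h z) 0 r = (r : ℂ) ^ (2 * k) * taylorCoeff h k := by
  have hsub : closedBall (0 : ℂ) r ⊆ ball (0 : ℂ) 1 := closedBall_subset_ball h1
  have hc := circleIntegral_one_div_sub_center_pow_smul_of_differentiable_on_off_countable
    (f := h) (c := 0) h0 k (Set.countable_empty) (hd.continuousOn.mono hsub)
    (fun z hz => hd.differentiableAt (isOpen_ball.mem_nhds (hsub (ball_subset_closedBall hz.1))))
  rw [Real.circleAverage_eq_circleIntegral h0.ne']
  have hcongr : (∮ z in C(0, r), (z - 0)⁻¹ • (conj z ^ k * h z))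
      = ∮ z in C(0, r), ((r : ℂ) ^ (2 * k)) • ((1 / (z - 0) ^ (k + 1)) • h z) := by
    refine circleIntegral.integral_congr h0.le fun z hz => ?_
    simp only [mem_sphere_iff_norm, sub_zero] at hz
    have hz0 : z ≠ 0 := by
      intro h; rw [h, norm_zero] at hz; exact h0.ne hz
    have hzz : conj z = (r : ℂ) ^ 2 / z := by
      rw [eq_div_iff hz0, mul_comm, Complex.mul_conj, Complex.normSq_eq_norm_sq, hz]
      push_cast; ring
    simp only [sub_zero, smul_eq_mul, hzz]
    rw [pow_mul, div_pow]
    field_simp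
    ring
  rw [hcongr, circleIntegral.integral_smul, hc]
  simp only [smul_eq_mul, taylorCoeff]
  have := Complex.two_pi_I_ne_zero
  have : ((k.factorial : ℕ) : ℂ) ≠ 0 := by exact_mod_cast k.factorial_ne_zero
  field_simp

lemma avg_center {h : ℂ → ℂ} (hd : DifferentiableOn ℂ h (ball (0 : ℂ) 1)) {r : ℝ}
    (h0 : 0 < r) (h1 : r < 1) : Real.circleAverage h 0 r = h 0 := by
  have := avg_conj_pow hd h0 h1 0
  simpa [taylorCoeff] using this

lemma avg_re {h : ℂ → ℂ} (hd : DifferentiableOn ℂ h (ball (0 : ℂ) 1)) {r : ℝ}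
    (h0 : 0 < r) (h1 : r < 1) : Real.circleAverage (fun z => (h z).re) 0 r = (h 0).re := by
  have hInt : CircleIntegrable h 0 r :=
    ContinuousOn.circleIntegrable h0.le (hd.continuousOn.mono (sphere_sub_ball h1))
  have := Complex.reCLM.circleAverage_comp_comm hInt
  rw [avg_center hd h0 h1] at this
  exact this

lemma avg_conj_pow_re {h : ℂ → ℂ} (hd : DifferentiableOn ℂ h (ball (0 : ℂ) 1)) {r : ℝ}
    (h0 : 0 < r) (h1 : r < 1) (k : ℕ) (hk : k ≠ 0) :
    Real.circleAverage (fun z => (((h z).re : ℝ) : ℂ) * conj z ^ k) 0 r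
      = (r : ℂ) ^ (2 * k) * taylorCoeff h k / 2 := by
  have hcont : ContinuousOn h (sphere (0 : ℂ) r) := hd.continuousOn.mono (sphere_sub_ball h1)
  have hi1 : CircleIntegrable (fun z => conj z ^ k * h z) 0 r :=
    ContinuousOn.circleIntegrable h0.le
      (((Complex.continuous_conj.continuousOn).pow k).mul hcont)
  have hi2 : CircleIntegrable (fun z => z ^ k * h z) 0 r :=
    ContinuousOn.circleIntegrable h0.le ((continuousOn_id.pow k).mul hcont)
  have hi3 : CircleIntegrable (fun z => conj (z ^ k * h z)) 0 r :=
    ContinuousOn.circleIntegrable h0.le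
      (Complex.continuous_conj.comp_continuousOn ((continuousOn_id.pow k).mul hcont))
  have e1 := avg_conj_pow hd h0 h1 k
  have e2 : Real.circleAverage (fun z => z ^ k * h z) 0 r = 0 := by
    rw [avg_center (h := fun z => z ^ k * h z) ((differentiableOn_id.pow k).mul hd) h0 h1]
    simp [hk]
  have e3 : Real.circleAverage (fun z => conj (z ^ k * h z)) 0 r = 0 := by
    have := (Complex.conjCLE : ℂ →L[ℝ] ℂ).circleAverage_comp_comm hi2
    rw [e2, map_zero] at this
    exact this
  have : (fun z => (((h z).re : ℝ) : ℂ) * conj z ^ k)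
      = fun z => (1 / 2 : ℂ) • (conj z ^ k * h z + conj (z ^ k * h z)) := by
    ext z
    rw [Complex.re_eq_add_conj]
    simp only [map_mul, map_pow, smul_eq_mul]
    ring
  rw [this, Real.circleAverage_fun_smul, Real.circleAverage_fun_add hi1 hi3, e1, e3]
  simp only [smul_eq_mul]; ring

lemma center_re_pos {h : ℂ → ℂ} (hd : DifferentiableOn ℂ h (ball (0 : ℂ) 1))
    (hpos : ∀ z ∈ ball (0 : ℂ) 1 \ {0}, 0 < (h z).re) : 0 < (h 0).re := by
  have h0 : (0 : ℝ) < 1 / 2 := by norm_num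
  have h1 : (1 / 2 : ℝ) < 1 := by norm_num
  have hcont : ContinuousOn (fun z => (h z).re) (sphere (0 : ℂ) (1 / 2)) :=
    Complex.continuous_re.comp_continuousOn (hd.continuousOn.mono (sphere_sub_ball h1))
  obtain ⟨w, hw, hmin⟩ := (isCompact_sphere (0 : ℂ) (1 / 2)).exists_isMinOn
    (NormedSpace.sphere_nonempty.2 h0.le) hcont
  have hw0 : w ≠ 0 := by
    rintro rfl
    simp at hw
  rw [← avg_re hd h0 h1]
  refine (hpos w ⟨sphere_sub_ball h1 hw, hw0⟩).trans_le ?_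
  have := Real.circleAverage_mono (c := 0) (R := 1 / 2) (f₁ := fun _ => (h w).re)
    (f₂ := fun z => (h z).re) (circleIntegrable_const _ _ _)
    (ContinuousOn.circleIntegrable h0.le hcont)
    (fun z hz => by
      rw [abs_of_pos h0] at hz
      exact hmin hz)
  rwa [Real.circleAverage_const] at this

/-- Normalized coefficient vector of a function with positive real part. -/
noncomputable def normVec (κ : ℝ) (h : ℂ → ℂ) (s : ℝ) : CoefVec :=
  ![1, s * taylorCoeff h 1 / (2 * κ), s ^ 2 * taylorCoeff h 2 / (2 * κ),
    s ^ 3 * taylorCoeff h 3 / (2 * κ), s ^ 4 * taylorCoeff h 4 / (2 * κ)]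

lemma herglotz_r {h : ℂ → ℂ} (hd : DifferentiableOn ℂ h (ball (0 : ℂ) 1))
    (hpos : ∀ z ∈ ball (0 : ℂ) 1 \ {0}, 0 < (h z).re) {r : ℝ} (h0 : 0 < r) (h1 : r < 1) :
    normVec (h 0).re h (r ^ 2) ∈ momHull := by
  have hκ := center_re_pos hd hpos
  set κ := (h 0).re with hκdef
  have hκc : (κ : ℂ) ≠ 0 := by exact_mod_cast hκ.ne'
  have hcont : ContinuousOn h (sphere (0 : ℂ) r) := hd.continuousOn.mono (sphere_sub_ball h1)
  have hrecont : ContinuousOn (fun z => (h z).re) (sphere (0 : ℂ) r) :=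
    Complex.continuous_re.comp_continuousOn hcont
  let F : ℂ → CoefVec := fun z => ((h z).re / κ) • momVec (conj z)
  have hmc : Continuous (fun z : ℂ => momVec (conj z)) := by
    refine continuous_pi fun k => ?_
    fin_cases k <;> simp [momVec] <;> fun_prop
  have hFc : ContinuousOn F (sphere (0 : ℂ) r) :=
    (hrecont.div_const κ).smul hmc.continuousOn
  have hFi : CircleIntegrable F 0 r := ContinuousOn.circleIntegrable h0.le hFc
  have hproj : ∀ k : Fin 5, Real.circleAverage (fun z => F z k) 0 r
      = (Real.circleAverage F 0 r) k := fun k =>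
    (ContinuousLinearMap.proj (R := ℝ) (φ := fun _ : Fin 5 => ℂ) k).circleAverage_comp_comm hFi
  have hk : ∀ k : ℕ, k ≠ 0 →
      Real.circleAverage (fun z => (((h z).re / κ : ℝ) : ℂ) * conj z ^ k) 0 r
        = ((r ^ 2 : ℝ) : ℂ) ^ k * taylorCoeff h k / (2 * κ) := by
    intro k hk
    have : (fun z => (((h z).re / κ : ℝ) : ℂ) * conj z ^ k)
        = fun z => (κ : ℂ)⁻¹ • ((((h z).re : ℝ) : ℂ) * conj z ^ k) := by
      ext z; push_cast; simp only [smul_eq_mul]; ring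
    rw [this, Real.circleAverage_fun_smul, avg_conj_pow_re hd h0 h1 k hk]
    push_cast
    simp only [smul_eq_mul]
    rw [pow_mul]
    field_simp
  have hFavg : Real.circleAverage F 0 r = normVec κ h (r ^ 2) := by
    ext k
    rw [← hproj]
    fin_cases k
    · have hre := avg_re hd h0 h1
      have e : (fun z => F z 0) = fun z => (κ : ℂ)⁻¹ • (((h z).re : ℝ) : ℂ) := by
        ext z; simp [F, momVec]; ring
      have hof := Complex.ofRealCLM.circleAverage_comp_comm
        (ContinuousOn.circleIntegrable h0.le hrecont)
      rw [hre] at hof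
      change Real.circleAverage (fun z => (((h z).re : ℝ) : ℂ)) 0 r = _ at hof
      change Real.circleAverage (fun z => F z 0) 0 r = 1
      rw [e, Real.circleAverage_fun_smul, hof]
      simp only [Complex.ofRealCLM_apply, smul_eq_mul]
      rw [← hκdef]; field_simp
    · have := hk 1 (by norm_num)
      simpa [F, momVec, normVec] using this
    · have := hk 2 (by norm_num)
      simpa [F, momVec, normVec] using this
    · have := hk 3 (by norm_num)
      simpa [F, momVec, normVec] using this
    · have := hk 4 (by norm_num)
      simpa [F, momVec, normVec] using this
  by_contra hnot
  obtain ⟨L, u, hL, hu⟩ := geometric_hahn_banach_closed_point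
    (convex_closedConvexHull (𝕜 := ℝ) (s := momVec '' closedBall (0 : ℂ) 1))
    isClosed_closedConvexHull hnot
  rw [← hFavg, ← L.circleAverage_comp_comm hFi] at hu
  have hle : Real.circleAverage (L ∘ F) 0 r
      ≤ Real.circleAverage (fun z => (u / κ) • (h z).re) 0 r := by
    refine Real.circleAverage_mono
      (ContinuousOn.circleIntegrable h0.le (L.continuous.comp_continuousOn hFc))
      (ContinuousOn.circleIntegrable h0.le (by fun_prop)) ?_
    intro z hz
    rw [abs_of_pos h0] at hz
    have hzn : ‖z‖ = r := by simpa using hz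
    have hz0 : z ≠ 0 := by
      rintro rfl
      rw [norm_zero] at hzn; exact h0.ne hzn
    have hp := hpos z ⟨sphere_sub_ball h1 hz, hz0⟩
    have hm := hL (momVec (conj z)) (subset_closedConvexHull ⟨conj z, by simp [hzn, h1.le], rfl⟩)
    simp only [Function.comp, F, map_smul, smul_eq_mul]
    have : 0 ≤ (h z).re / κ := by positivity
    calc (h z).re / κ * L (momVec (conj z)) ≤ (h z).re / κ * u :=
          mul_le_mul_of_nonneg_left hm.le this
      _ = u / κ * (h z).re := by ring
  rw [Real.circleAverage_fun_smul, avg_re hd h0 h1] at hle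
  have : (u / κ) • κ = u := by simp only [smul_eq_mul]; field_simp
  rw [this] at hle
  linarith

lemma herglotz {h : ℂ → ℂ} (hd : DifferentiableOn ℂ h (ball (0 : ℂ) 1))
    (hpos : ∀ z ∈ ball (0 : ℂ) 1 \ {0}, 0 < (h z).re) :
    normVec (h 0).re h 1 ∈ momHull := by
  have hc : Continuous (fun r : ℝ => normVec (h 0).re h (r ^ 2)) := by
    refine continuous_pi fun k => ?_
    fin_cases k <;> simp [normVec] <;> fun_prop
  have hcl : IsClosed {r : ℝ | normVec (h 0).re h (r ^ 2) ∈ momHull} :=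
    IsClosed.preimage hc isClosed_closedConvexHull
  have hsub : closure (Set.Ioo (0 : ℝ) 1) ⊆ {r : ℝ | normVec (h 0).re h (r ^ 2) ∈ momHull} :=
    closure_minimal (fun r hr => herglotz_r hd hpos hr.1 hr.2) hcl
  rw [closure_Ioo (by norm_num)] at hsub
  have := hsub (show (1 : ℝ) ∈ Set.Icc (0 : ℝ) 1 by simp)
  change normVec (h 0).re h (1 ^ 2) ∈ momHull at this
  simpa using this

lemma tc_mul {F H : ℂ → ℂ} (hF : AnalyticAt ℂ F 0) (hH : AnalyticAt ℂ H 0) (k : ℕ) :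
    taylorCoeff (fun z => F z * H z) k
      = ∑ i ∈ Finset.range (k + 1), taylorCoeff F i * taylorCoeff H (k - i) := by
  unfold taylorCoeff
  rw [iteratedDeriv_fun_mul hF.contDiffAt hH.contDiffAt, Finset.sum_div]
  refine Finset.sum_congr rfl fun i hi => ?_
  have hik : i ≤ k := by simpa [Nat.lt_succ_iff] using hi
  rw [Nat.cast_choose ℂ hik]
  have h1 : ((k.factorial : ℕ) : ℂ) ≠ 0 := by exact_mod_cast k.factorial_ne_zero
  have h2 : ((i.factorial : ℕ) : ℂ) ≠ 0 := by exact_mod_cast i.factorial_ne_zero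
  have h3 : (((k - i).factorial : ℕ) : ℂ) ≠ 0 := by exact_mod_cast (k - i).factorial_ne_zero
  field_simp

lemma tc_congr {F H : ℂ → ℂ} (h : ∀ z ∈ ball (0 : ℂ) 1, F z = H z) (k : ℕ) :
    taylorCoeff F k = taylorCoeff H k := by
  unfold taylorCoeff
  have : F =ᶠ[nhds 0] H :=
    Filter.eventually_of_mem (isOpen_ball.mem_nhds (by simp)) h
  rw [this.iteratedDeriv_eq k]

lemma tc_deriv (F : ℂ → ℂ) (k : ℕ) :
    taylorCoeff (deriv F) k = (k + 1) * taylorCoeff F (k + 1) := by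
  unfold taylorCoeff
  rw [iteratedDeriv_succ', Nat.factorial_succ]
  have h1 : ((k.factorial : ℕ) : ℂ) ≠ 0 := by exact_mod_cast k.factorial_ne_zero
  have h2 : (k : ℂ) + 1 ≠ 0 := by exact_mod_cast k.succ_ne_zero
  push_cast
  field_simp

lemma tc_zero (F : ℂ → ℂ) : taylorCoeff F 0 = F 0 := by simp [taylorCoeff]

lemma tc_id (k : ℕ) : taylorCoeff (fun z => z) (k + 1) = if k = 0 then 1 else 0 := by
  unfold taylorCoeff
  rw [iteratedDeriv_succ']
  simp only [deriv_id'']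
  rw [iteratedDeriv_const]
  by_cases hk : k = 0 <;> simp [hk]

lemma tc_X_mul {G : ℂ → ℂ} (hG : AnalyticAt ℂ G 0) (k : ℕ) :
    taylorCoeff (fun z => z * G z) (k + 1) = taylorCoeff G k := by
  rw [tc_mul (F := fun z => z) analyticAt_id hG, Finset.sum_range_succ', Finset.sum_range_succ']
  simp [tc_id, tc_zero]

lemma analyticAt_zero_of {F : ℂ → ℂ} (hF : DifferentiableOn ℂ F (ball (0 : ℂ) 1)) :
    AnalyticAt ℂ F 0 :=
  hF.analyticAt (isOpen_ball.mem_nhds (by simp))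

lemma starlike_coeffs {g : ℂ → ℂ} (hg : IsStarlikeFn g) :
    ∃ G : ℂ → ℂ, DifferentiableOn ℂ G (ball (0 : ℂ) 1) ∧ G 0 = 1 ∧
      (∀ z ∈ ball (0 : ℂ) 1, G z ≠ 0) ∧ (∀ z, g z = z * G z) ∧
      ((fun k : Fin 5 => taylorCoeff G k) ∈ hullSet 2) := by
  obtain ⟨hd, hg0, hg1, hpos⟩ := hg
  have hnhds : ball (0 : ℂ) 1 ∈ nhds (0 : ℂ) := isOpen_ball.mem_nhds (by simp)
  have hGd : DifferentiableOn ℂ (dslope g 0) (ball (0 : ℂ) 1) :=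
    (Complex.differentiableOn_dslope hnhds).2 hd
  have hG0 : dslope g 0 0 = 1 := by rw [dslope_same, hg1]
  have hgG : ∀ z, g z = z * dslope g 0 z := by
    intro z
    have := sub_smul_dslope g 0 z
    rw [hg0] at this
    simpa using this.symm
  have hne : ∀ z ∈ ball (0 : ℂ) 1, dslope g 0 z ≠ 0 := by
    intro z hz h
    by_cases hz0 : z = 0
    · rw [hz0, hG0] at h; exact one_ne_zero h
    · have := hpos z ⟨hz, hz0⟩
      rw [hgG z, h] at this
      simp at this
  refine ⟨dslope g 0, hGd, hG0, hne, hgG, ?_⟩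
  set G := dslope g 0 with hGdef
  have hgdd : DifferentiableOn ℂ (deriv g) (ball (0 : ℂ) 1) := hd.deriv isOpen_ball
  have hqd : DifferentiableOn ℂ (fun z => deriv g z / G z) (ball (0 : ℂ) 1) := hgdd.div hGd hne
  set q : ℂ → ℂ := fun z => deriv g z / G z with hq
  have hq0 : q 0 = 1 := by simp [hq, hG0, hg1]
  have hqpos : ∀ z ∈ ball (0 : ℂ) 1 \ {0}, 0 < (q z).re := by
    intro z hz
    have := hpos z hz
    have hz0 : z ≠ 0 := hz.2
    have hGz := hne z hz.1
    rw [hgG z, mul_div_mul_left _ _ hz0] at this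
    exact this
  have hH := expVec_mem (herglotz hqd hqpos)
  rw [hq0] at hH
  have hrec : ∀ k : ℕ, (k + 1) * taylorCoeff G k
      = ∑ i ∈ Finset.range (k + 1), taylorCoeff q i * taylorCoeff G (k - i) := by
    intro k
    rw [← tc_mul (analyticAt_zero_of hqd) (analyticAt_zero_of hGd),
      tc_congr (H := deriv g) (fun z hz => div_mul_cancel₀ _ (hne z hz)), tc_deriv,
      ← tc_X_mul (analyticAt_zero_of hGd)]
    rw [show (fun z => z * G z) = g from funext fun z => (hgG z).symm]
  have r1 := hrec 1
  have r2 := hrec 2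
  have r3 := hrec 3
  have r4 := hrec 4
  simp only [Finset.sum_range_succ, Finset.sum_range_zero, tc_zero, hq0, hG0, zero_add] at r1 r2 r3 r4
  norm_num [tc_zero, hG0] at r1 r2 r3 r4
  have s1 : taylorCoeff G 1 = taylorCoeff q 1 := by linear_combination r1
  rw [s1] at r2 r3 r4
  have s2 : taylorCoeff G 2 = (taylorCoeff q 1 ^ 2 + taylorCoeff q 2) / 2 := by
    linear_combination r2 / 2
  rw [s2] at r3 r4
  have s3 : taylorCoeff G 3 = (taylorCoeff q 1 ^ 3 + 3 * taylorCoeff q 1 * taylorCoeff q 2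
      + 2 * taylorCoeff q 3) / 6 := by
    linear_combination r3 / 3
  rw [s3] at r4
  convert hH using 1
  ext k
  fin_cases k
  · simp [expVec, tc_zero, hG0]
  · simp [expVec, normVec, s1]
    ring
  · simp [expVec, normVec, s2]
    ring
  · simp [expVec, normVec, s3]
    ring
  · simp [expVec, normVec]
    linear_combination r4 / 4

/-- The target convex region. -/
def Om (η : ℂ) (lam : ℝ) : Set CoefVec :=
  {v | (η ^ 2 * (v 4 / 5)).re + lam * (η * (v 2 / 3)).im ^ 2 ≤ 5}

lemma Om_convex (η : ℂ) {lam : ℝ} (hlam : 0 ≤ lam) : Convex ℝ (Om η lam) := by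
  intro v hv w hw s t hs ht hst
  simp only [Om, Set.mem_ofPred_eq] at hv hw ⊢
  have e1 : (η ^ 2 * ((s • v + t • w) 4 / 5)).re
      = s * (η ^ 2 * (v 4 / 5)).re + t * (η ^ 2 * (w 4 / 5)).re := by
    rw [← Complex.re_ofReal_mul, ← Complex.re_ofReal_mul, ← Complex.add_re]
    congr 1
    simp only [Pi.add_apply, Pi.smul_apply, Complex.real_smul]; ring
  have e2 : (η * ((s • v + t • w) 2 / 3)).im
      = s * (η * (v 2 / 3)).im + t * (η * (w 2 / 3)).im := by
    rw [← Complex.im_ofReal_mul, ← Complex.im_ofReal_mul, ← Complex.add_im]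
    congr 1
    simp only [Pi.add_apply, Pi.smul_apply, Complex.real_smul]; ring
  rw [e1, e2]
  set A := (η ^ 2 * (v 4 / 5)).re
  set B := (η ^ 2 * (w 4 / 5)).re
  set C := (η * (v 2 / 3)).im
  set D := (η * (w 2 / 3)).im
  obtain rfl : t = 1 - s := by linarith
  have h1 := mul_le_mul_of_nonneg_left hv hs
  have h2 := mul_le_mul_of_nonneg_left hw ht
  have h3 : 0 ≤ lam * (s * (1 - s)) * (C - D) ^ 2 := by positivity
  nlinarith

lemma Om_closed (η : ℂ) (lam : ℝ) : IsClosed (Om η lam) := by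
  refine isClosed_le ?_ continuous_const
  fun_prop

lemma key_ineq {lam : ℝ} (hlam1 : 0 < lam) (hlam2 : lam ≤ 6 / 7) {s v : ℂ} (hs : ‖s‖ ≤ 1)
    (hv : ‖v‖ ≤ 1) :
    (3 * s ^ 2 - 2 * s * v).re + lam * (2 * s - v).im ^ 2 ≤ 5 := by
  have h1 : s.re ^ 2 + s.im ^ 2 ≤ 1 := by
    have := Complex.sq_norm s
    rw [Complex.normSq_apply] at this
    nlinarith [norm_nonneg s]
  have h2 : v.re ^ 2 + v.im ^ 2 ≤ 1 := by
    have := Complex.sq_norm v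
    rw [Complex.normSq_apply] at this
    nlinarith [norm_nonneg v]
  have e1 : (3 * s ^ 2 - 2 * s * v).re
      = 3 * (s.re ^ 2 - s.im ^ 2) - 2 * (s.re * v.re - s.im * v.im) := by
    simp [pow_two]; ring
  have e2 : (2 * s - v).im = 2 * s.im - v.im := by simp
  rw [e1, e2]
  have h3 : lam * (2 * s.im - v.im) ^ 2 ≤ 6 / 7 * (2 * s.im - v.im) ^ 2 :=
    mul_le_mul_of_nonneg_right hlam2 (sq_nonneg _)
  nlinarith [sq_nonneg (s.re + v.re), sq_nonneg (5 * s.im + v.im)]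

/-- Multiplication by `1 - x z`. -/
def shiftMap (x : ℂ) (D : CoefVec) : CoefVec :=
  ![D 0, D 1 - x * D 0, D 2 - x * D 1, D 3 - x * D 2, D 4 - x * D 3]

lemma shiftMap_linear (x : ℂ) : IsLinearMap ℝ (shiftMap x) where
  map_add x y := by ext k; fin_cases k <;> simp [shiftMap] <;> ring
  map_smul r x := by ext k; fin_cases k <;> simp [shiftMap] <;> ring

/-- Coefficients of the tilted function with positive real part. -/
def tiltMap (ξ : ℂ) (U : CoefVec) : CoefVec :=
  ![U 0, (1 - ξ) * U 1, (1 - ξ) * U 2, (1 - ξ) * U 3, (1 - ξ) * U 4]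

lemma tilt_linear (ξ : ℂ) (c : CoefVec) :
    IsLinearMap ℝ (fun U => tmul c (tiltMap ξ U)) where
  map_add x y := by ext k; fin_cases k <;> simp [tiltMap, tmul] <;> ring
  map_smul r x := by ext k; fin_cases k <;> simp [tiltMap, tmul] <;> ring

lemma tilt_mom (ξ u : ℂ) (c : CoefVec) :
    tmul c (tiltMap ξ (momVec u)) = shiftMap (ξ * u) (tmul c (momVec u)) := by
  ext k; fin_cases k <;> simp [tiltMap, tmul, momVec, shiftMap] <;> ring

lemma region_mem {lam : ℝ} (hlam1 : 0 < lam) (hlam2 : lam ≤ 6 / 7) {η ξ : ℂ} (hη : ‖η‖ = 1)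
    (hξ : ‖ξ‖ = 1) {c U : CoefVec} (hc : c ∈ hullSet 2) (hU : U ∈ momHull) :
    tmul c (tiltMap ξ U) ∈ Om η lam := by
  refine hull_map (tilt_linear ξ c) (Om_convex η hlam1.le) (Om_closed η lam) ?_ hU
  rintro _ ⟨u, hu, rfl⟩
  have hu1 : ‖u‖ ≤ 1 := by simpa using hu
  change tmul c (tiltMap ξ (momVec u)) ∈ _
  rw [tilt_mom, ← powVec_one]
  have hD : tmul c (powVec 1 u) ∈ hullSet (2 + 1) :=
    tmul_mem (by norm_num) (by norm_num) hc (powVec_mem hu1)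
  refine hull_map (shiftMap_linear (ξ * u)) (Om_convex η hlam1.le) (Om_closed η lam) ?_ hD
  rintro _ ⟨w, hw, rfl⟩
  have hw1 : ‖w‖ ≤ 1 := by simpa using hw
  have hk := key_ineq hlam1 hlam2 (s := η * w ^ 2) (v := η * (ξ * u) * w)
    (by rw [norm_mul, norm_pow, hη, one_mul]; exact pow_le_one₀ (norm_nonneg _) hw1)
    (by
      rw [norm_mul, norm_mul, norm_mul, hη, hξ, one_mul, one_mul]
      exact mul_le_one₀ hu1 (norm_nonneg _) hw1)
  change _ + _ ≤ (5 : ℝ)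
  convert hk using 2
  · congr 1
    simp [shiftMap, powVec]; ring
  · congr 3
    simp [shiftMap, powVec]; ring

lemma exists_rot (A : ℂ) : ∃ η : ℂ, ‖η‖ = 1 ∧ (η ^ 2 * A).re = ‖A‖ := by
  refine ⟨Complex.exp (((-A.arg / 2 : ℝ) : ℂ) * I), Complex.norm_exp_ofReal_mul_I _, ?_⟩
  have h : Complex.exp (((-A.arg / 2 : ℝ) : ℂ) * I) ^ 2 * A = (‖A‖ : ℂ) := by
    conv_lhs => rw [← Complex.norm_mul_exp_arg_mul_I A]
    rw [← Complex.exp_nat_mul, mul_left_comm, ← Complex.exp_add]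
    have : ((2 : ℕ) : ℂ) * (((-A.arg / 2 : ℝ) : ℂ) * I) + A.arg * I = 0 := by
      push_cast; ring
    rw [Complex.norm_mul_exp_arg_mul_I, this]; simp
  rw [h, Complex.ofReal_re]

theorem generalized_zalcman_closeToConvex_n3_small_lambda
    (lam : ℝ) (hlam1 : 0 < lam) (hlam2 : lam ≤ 6 / 7)
    (f : ℂ → ℂ) (hf : IsCloseToConvex f) :
    ‖(lam : ℂ) * (taylorCoeff f 3) ^ 2 - taylorCoeff f 5‖ ≤ 5 := by
  obtain ⟨hd, hf0, hf1, θ, g, hg, hpos⟩ := hf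
  obtain ⟨G, hGd, hG0, hne, hgG, hc⟩ := starlike_coeffs hg
  have hfdd : DifferentiableOn ℂ (deriv f) (ball (0 : ℂ) 1) := hd.deriv isOpen_ball
  have hpd : DifferentiableOn ℂ (fun z => deriv f z / G z) (ball (0 : ℂ) 1) := hfdd.div hGd hne
  set p : ℂ → ℂ := fun z => deriv f z / G z with hp
  have hp0 : p 0 = 1 := by simp [hp, hG0, hf1]
  set e : ℂ := Complex.exp (θ * I) with he
  have hhd : DifferentiableOn ℂ (fun z => e * p z) (ball (0 : ℂ) 1) := hpd.const_mul e
  have hhpos : ∀ z ∈ ball (0 : ℂ) 1 \ {0}, 0 < (e * p z).re := by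
    intro z hz
    have := hpos z hz
    have hz0 : z ≠ 0 := hz.2
    rw [hgG z, mul_comm e z, mul_assoc, mul_div_mul_left _ _ hz0, mul_div_assoc] at this
    exact this
  have hU := herglotz hhd hhpos
  have hκ := center_re_pos hhd hhpos
  simp only [hp0, mul_one] at hU hκ
  have hetc : ∀ k, taylorCoeff (fun z => e * p z) k = e * taylorCoeff p k := by
    intro k
    unfold taylorCoeff
    rw [iteratedDeriv_const_mul_field, mul_div_assoc]
  have hκc : (e.re : ℂ) ≠ 0 := by exact_mod_cast hκ.ne'
  have he1 : ‖e‖ = 1 := Complex.norm_exp_ofReal_mul_I θ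
  have hconj : e * (starRingEnd ℂ) e = 1 := by
    rw [Complex.mul_conj, Complex.normSq_eq_norm_sq, he1]; simp
  have hsum : (e.re : ℂ) * 2 = e + (starRingEnd ℂ) e := by
    rw [Complex.re_eq_add_conj]; ring
  set ξ : ℂ := -((starRingEnd ℂ) e) ^ 2 with hξ
  have hξ1 : ‖ξ‖ = 1 := by rw [hξ, norm_neg, norm_pow, Complex.norm_conj, he1, one_pow]
  have hξe : (1 - ξ) * e = 2 * e.re := by
    rw [hξ]; linear_combination (starRingEnd ℂ) e * hconj - hsum
  have htilt : tiltMap ξ (normVec e.re (fun z => e * p z) 1)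
      = fun k : Fin 5 => taylorCoeff p k := by
    have hk : ∀ k, (1 - ξ) * (e * taylorCoeff p k / (2 * e.re)) = taylorCoeff p k := by
      intro k
      rw [← mul_div_assoc, ← mul_assoc, hξe]
      field_simp
    ext k
    fin_cases k
    · simp [tiltMap, normVec, tc_zero, hp0]
    · simpa [tiltMap, normVec, hetc] using hk 1
    · simpa [tiltMap, normVec, hetc] using hk 2
    · simpa [tiltMap, normVec, hetc] using hk 3
    · simpa [tiltMap, normVec, hetc] using hk 4
  have hprod : ∀ k : ℕ, (k + 1) * taylorCoeff f (k + 1)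
      = ∑ i ∈ Finset.range (k + 1), taylorCoeff G i * taylorCoeff p (k - i) := by
    intro k
    rw [← tc_mul (analyticAt_zero_of hGd) (analyticAt_zero_of hpd),
      tc_congr (H := deriv f) (fun z hz => mul_div_cancel₀ _ (hne z hz)), tc_deriv]
  have v2 : taylorCoeff f 3 = tmul (fun k : Fin 5 => taylorCoeff G k)
      (fun k : Fin 5 => taylorCoeff p k) 2 / 3 := by
    have := hprod 2
    norm_num [Finset.sum_range_succ] at this
    simp [tmul]
    linear_combination this / 3
  have v4 : taylorCoeff f 5 = tmul (fun k : Fin 5 => taylorCoeff G k)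
      (fun k : Fin 5 => taylorCoeff p k) 4 / 5 := by
    have := hprod 4
    norm_num [Finset.sum_range_succ] at this
    simp [tmul]
    linear_combination this / 5
  obtain ⟨η, hη, hηA⟩ := exists_rot (taylorCoeff f 5 - lam * (taylorCoeff f 3) ^ 2)
  have hreg := region_mem hlam1 hlam2 hη hξ1 hc hU
  rw [htilt] at hreg
  change _ + _ ≤ (5 : ℝ) at hreg
  rw [← v2, ← v4] at hreg
  rw [norm_sub_rev, ← hηA]
  have e1 : η ^ 2 * (taylorCoeff f 5 - lam * (taylorCoeff f 3) ^ 2)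
      = η ^ 2 * taylorCoeff f 5 - lam * (η * taylorCoeff f 3) ^ 2 := by ring
  rw [e1, Complex.sub_re, Complex.re_ofReal_mul]
  have e2 : ((η * taylorCoeff f 3) ^ 2).re
      = (η * taylorCoeff f 3).re ^ 2 - (η * taylorCoeff f 3).im ^ 2 := by
    rw [pow_two, Complex.mul_re]; ring
  rw [e2]
  have := mul_nonneg hlam1.le (sq_nonneg (η * taylorCoeff f 3).re)
  linarith
end

section
/- If f is a close-to-convex function on the unit disk with Taylor coefficients a_k, then the Zalcman functional for n = 3 satisfies |a_3² − a_5| ≤ (5 + 3√3)/2. -/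
open Complex Metric

open Real in
/-- The trigonometric maximum on the torus. -/
lemma torus_bound (a b : ℂ) (ha : ‖a‖ = 1) (hb : ‖b‖ = 1) :
    ((2 * a - b).re) ^ 2 - (3 * a ^ 2 - 2 * a * b).re ≤ (5 + 3 * Real.sqrt 3) / 2 := by
  have ha' : a.re ^ 2 + a.im ^ 2 = 1 := by
    have := Complex.sq_norm a; rw [ha, Complex.normSq_apply] at this; nlinarith
  have hb' : b.re ^ 2 + b.im ^ 2 = 1 := by
    have := Complex.sq_norm b; rw [hb, Complex.normSq_apply] at this; nlinarith
  have e1 : (2 * a - b).re = 2 * a.re - b.re := by simp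
  have e2 : (3 * a ^ 2 - 2 * a * b).re
      = 3 * (a.re ^ 2 - a.im ^ 2) - 2 * (a.re * b.re - a.im * b.im) := by
    simp [pow_two]; ring
  rw [e1, e2]
  generalize a.re = c at *
  generalize a.im = s at *
  generalize b.re = C at *
  generalize b.im = S at *
  set T := c * C + s * S with hT
  set N := -(c ^ 2 - s ^ 2) + (C ^ 2 - S ^ 2) / 2 with hN
  have hu : T ^ 2 + (s * C - c * S) ^ 2 = 1 := by
    have : T ^ 2 + (s * C - c * S) ^ 2 = (c ^ 2 + s ^ 2) * (C ^ 2 + S ^ 2) := by rw [hT]; ring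
    rw [this, ha', hb']; norm_num
  have hv : (c * C - s * S) ^ 2 + (s * C + c * S) ^ 2 = 1 := by
    have : (c * C - s * S) ^ 2 + (s * C + c * S) ^ 2 = (c ^ 2 + s ^ 2) * (C ^ 2 + S ^ 2) := by ring
    rw [this, ha', hb']; norm_num
  have hN2 : N = -(1/2) * T * (c * C - s * S) + 3 / 2 * (s * C - c * S) * (s * C + c * S) := by
    have : N = -(c ^ 2 - s ^ 2) * (C ^ 2 + S ^ 2) + (C ^ 2 - S ^ 2) / 2 * (c ^ 2 + s ^ 2) := by
      rw [ha', hb', hN]; ring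
    rw [this, hT]; ring
  have key : N ^ 2 ≤ 9 / 4 - 2 * T ^ 2 := by
    have h0 := sq_nonneg (1/2 * T * (s * C + c * S) + 3 / 2 * (s * C - c * S) * (c * C - s * S))
    have h1 : N ^ 2 + (1/2 * T * (s * C + c * S) + 3 / 2 * (s * C - c * S) * (c * C - s * S)) ^ 2
        = (1/4 * T ^ 2 + 9 / 4 * (s * C - c * S) ^ 2) *
          ((c * C - s * S) ^ 2 + (s * C + c * S) ^ 2) := by rw [hN2]; ring
    rw [hv] at h1
    nlinarith
  have h3 : Real.sqrt 3 ^ 2 = 3 := Real.sq_sqrt (by norm_num)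
  have h3' : 0 ≤ Real.sqrt 3 := Real.sqrt_nonneg 3
  have fin : -2 * T + N ≤ 3 * Real.sqrt 3 / 2 := by
    refine (le_abs_self _).trans (abs_le_of_sq_le_sq ?_ (by positivity))
    nlinarith [sq_nonneg (T + N)]
  nlinarith

/-- Maximum principle for the real part of an entire function on the closed unit disk. -/
lemma re_max_disk (F : ℂ → ℂ) (hF : Differentiable ℂ F) (C : ℝ)
    (h : ∀ z : ℂ, ‖z‖ = 1 → (F z).re ≤ C) (z : ℂ) (hz : ‖z‖ ≤ 1) : (F z).re ≤ C := by
  have := Complex.norm_le_of_forall_mem_frontier_norm_le (f := fun z => Complex.exp (F z))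
    (U := ball (0:ℂ) 1) (C := Real.exp C) isBounded_ball
    (hF.cexp.diffContOnCl) (by
      intro w hw
      rw [frontier_ball _ one_ne_zero] at hw
      rw [Complex.norm_exp]
      exact Real.exp_le_exp.2 (h w (by simpa using hw))) (z := z) (by
      rw [closure_ball _ one_ne_zero]; simpa using hz)
  rw [Complex.norm_exp] at this
  exact Real.exp_le_exp.1 this

/-- The bound for the extreme kernels, extended to the closed bidisk. -/
lemma kernel_bound (η : ℂ) (hη : ‖η‖ = 1) (t : ℝ) (x v : ℂ) (hx : ‖x‖ = 1) (hv : ‖v‖ ≤ 1) :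
    (2 * t * η * (2 * v ^ 2 - x * v) - η ^ 2 * (3 * v ^ 4 - 2 * x * v ^ 3)).re
      ≤ t ^ 2 + (5 + 3 * Real.sqrt 3) / 2 := by
  refine re_max_disk (fun v => 2 * t * η * (2 * v ^ 2 - x * v)
    - η ^ 2 * (3 * v ^ 4 - 2 * x * v ^ 3)) (by fun_prop) _ ?_ v hv
  intro v hv
  have := torus_bound (η * v ^ 2) (η * x * v) (by simp [hη, hv]) (by simp [hη, hv, hx])
  have e : 2 * t * η * (2 * v ^ 2 - x * v) - η ^ 2 * (3 * v ^ 4 - 2 * x * v ^ 3)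
    = ((2 * t : ℝ) : ℂ) * (2 * (η * v ^ 2) - η * x * v)
      - (3 * (η * v ^ 2) ^ 2 - 2 * (η * v ^ 2) * (η * x * v)) := by push_cast; ring
  show (2 * t * η * (2 * v ^ 2 - x * v) - η ^ 2 * (3 * v ^ 4 - 2 * x * v ^ 3)).re ≤ _
  rw [e, Complex.sub_re, Complex.re_ofReal_mul]
  nlinarith [sq_nonneg ((2 * (η * v ^ 2) - η * x * v).re - t)]

/-- The form `α c₂ + β c₄` in terms of the coefficients of the three factors. -/
def triForm (α β x1 x2 x3 x4 y1 y2 y3 y4 p1 p2 p3 p4 : ℂ) : ℂ :=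
  α * (x2 + x1 * y1 + y2 + (x1 + y1) * p1 + p2) +
  β * (x4 + x3 * y1 + x2 * y2 + x1 * y3 + y4 + (x3 + x2 * y1 + x1 * y2 + y3) * p1
    + (x2 + x1 * y1 + y2) * p2 + (x1 + y1) * p3 + p4)

def kerForm (α β X v : ℂ) : ℂ :=
  α * (6 * v ^ 2 + 3 * X * v) + β * (15 * v ^ 4 + 10 * X * v ^ 3)

/-- average of `kerForm` over a segment -/
noncomputable def segForm (α β X u w : ℂ) : ℂ :=
  (7 * kerForm α β X u + 32 * kerForm α β X (3/4 * u + 1/4 * w)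
   + 12 * kerForm α β X (1/2 * u + 1/2 * w)
   + 32 * kerForm α β X (1/4 * u + 3/4 * w) + 7 * kerForm α β X w) / 90

lemma tri_eq (α β c u w z : ℂ) :
    triForm α β w (w ^ 2) (w ^ 3) (w ^ 4) z (z ^ 2) (z ^ 3) (z ^ 4)
      ((1 + c) * u) ((1 + c) * u ^ 2) ((1 + c) * u ^ 3) ((1 + c) * u ^ 4) =
    (16 * segForm α β (c * u) (3/4 * u + 1/4 * w) (3/4 * u + 1/4 * z)
     + 12 * segForm α β (c * u) (1/2 * u + 1/2 * w) (1/2 * u + 1/2 * z)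
     + 48 * segForm α β (c * u) (1/4 * u + 3/4 * w) (1/4 * u + 3/4 * z)
     + 14 * segForm α β (c * u) w z) / 90 := by
  unfold triForm segForm kerForm
  ring

lemma norm_comb_le (s : ℝ) (h0 : 0 ≤ s) (h1 : s ≤ 1) (u w : ℂ) (hu : ‖u‖ ≤ 1) (hw : ‖w‖ ≤ 1) :
    ‖((1 - s : ℝ) : ℂ) * u + (s : ℂ) * w‖ ≤ 1 := by
  refine (norm_add_le _ _).trans ?_
  rw [norm_mul, norm_mul, Complex.norm_real, Complex.norm_real, Real.norm_of_nonneg h0,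
    Real.norm_of_nonneg (by linarith)]
  nlinarith

lemma comb_all (u w : ℂ) (hu : ‖u‖ ≤ 1) (hw : ‖w‖ ≤ 1) :
    ‖3/4 * u + 1/4 * w‖ ≤ 1 ∧ ‖1/2 * u + 1/2 * w‖ ≤ 1 ∧ ‖1/4 * u + 3/4 * w‖ ≤ 1 := by
  refine ⟨?_, ?_, ?_⟩
  · have := norm_comb_le (1/4) (by norm_num) (by norm_num) u w hu hw
    norm_num at this; exact this
  · have := norm_comb_le (1/2) (by norm_num) (by norm_num) u w hu hw
    norm_num at this ⊢; exact this
  · have := norm_comb_le (3/4) (by norm_num) (by norm_num) u w hu hw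
    norm_num at this; exact this

lemma seg_le (α β X : ℂ) (C : ℝ) (h : ∀ v : ℂ, ‖v‖ ≤ 1 → (kerForm α β X v).re ≤ C)
    (u w : ℂ) (hu : ‖u‖ ≤ 1) (hw : ‖w‖ ≤ 1) : (segForm α β X u w).re ≤ C := by
  obtain ⟨h1, h2, h3⟩ := comb_all u w hu hw
  have a1 := h _ hu
  have a2 := h _ h1
  have a3 := h _ h2
  have a4 := h _ h3
  have a5 := h _ hw
  have : (segForm α β X u w).re = (7 * (kerForm α β X u).re
   + 32 * (kerForm α β X (3/4 * u + 1/4 * w)).re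
   + 12 * (kerForm α β X (1/2 * u + 1/2 * w)).re
   + 32 * (kerForm α β X (1/4 * u + 3/4 * w)).re + 7 * (kerForm α β X w).re) / 90 := by
    unfold segForm
    generalize kerForm α β X u = k1
    generalize kerForm α β X _ = k2
    generalize kerForm α β X _ = k3
    generalize kerForm α β X _ = k4
    generalize kerForm α β X w = k5
    simp
  rw [this]; linarith

lemma tri_le (α β c u w z : ℂ) (C : ℝ) (hu : ‖u‖ = 1) (hw : ‖w‖ = 1) (hz : ‖z‖ = 1)
    (h : ∀ v : ℂ, ‖v‖ ≤ 1 → (kerForm α β (c * u) v).re ≤ C) :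
    (triForm α β w (w ^ 2) (w ^ 3) (w ^ 4) z (z ^ 2) (z ^ 3) (z ^ 4)
      ((1 + c) * u) ((1 + c) * u ^ 2) ((1 + c) * u ^ 3) ((1 + c) * u ^ 4)).re ≤ C := by
  obtain ⟨h1, h2, h3⟩ := comb_all u w hu.le hw.le
  obtain ⟨g1, g2, g3⟩ := comb_all u z hu.le hz.le
  have a1 := seg_le α β (c * u) C h _ _ h1 g1
  have a2 := seg_le α β (c * u) C h _ _ h2 g2
  have a3 := seg_le α β (c * u) C h _ _ h3 g3
  have a4 := seg_le α β (c * u) C h _ _ hw.le hz.le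
  rw [tri_eq]
  generalize segForm α β (c * u) w z = k4 at *
  generalize segForm α β (c * u) (3/4 * u + 1/4 * w) (3/4 * u + 1/4 * z) = k1 at *
  generalize segForm α β (c * u) (1/2 * u + 1/2 * w) (1/2 * u + 1/2 * z) = k2 at *
  generalize segForm α β (c * u) (1/4 * u + 3/4 * w) (1/4 * u + 3/4 * z) = k3 at *
  have : ((16 * k1 + 12 * k2 + 48 * k3 + 14 * k4) / 90).re
    = (16 * k1.re + 12 * k2.re + 48 * k3.re + 14 * k4.re) / 90 := by simp
  rw [this]; linarith

/-- Cauchy coefficient formula via circle averages. -/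
lemma avg_coeff (P : ℂ → ℂ) (hP : DifferentiableOn ℂ P (ball (0:ℂ) 1)) (r : ℝ) (h0 : 0 < r)
    (h1 : r < 1) (k : ℕ) :
    Real.circleAverage (fun z => P z * (r / z) ^ k) 0 r = r ^ k * taylorCoeff P k := by
  have hc : DifferentiableOn ℂ P (closedBall 0 r) := hP.mono (closedBall_subset_ball h1)
  have := hc.circleIntegral_one_div_sub_center_pow_smul h0 k
  rw [Real.circleAverage_eq_circleIntegral h0.ne']
  have e : (∮ z in C(0, r), (z - 0)⁻¹ • (P z * (r / z) ^ k))
      = (r : ℂ) ^ k • ∮ z in C(0, r), (1 / (z - 0) ^ (k + 1)) • P z := by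
    rw [← circleIntegral.integral_smul]
    congr 1; ext z
    simp only [sub_zero, smul_eq_mul, div_pow, pow_succ]
    field_simp
  rw [e, this, taylorCoeff]
  have hpi : (2 * (Real.pi : ℂ) * I) ≠ 0 := Complex.two_pi_I_ne_zero
  simp only [smul_eq_mul]
  field_simp

lemma avg_zero (P : ℂ → ℂ) (hP : DifferentiableOn ℂ P (ball (0:ℂ) 1)) (r : ℝ) (h0 : 0 < r)
    (h1 : r < 1) (Q : ℂ → ℂ) (hQ : Differentiable ℂ Q) :
    Real.circleAverage (fun z => P z * Q z) 0 r = P 0 * Q 0 := by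
  have hc : DifferentiableOn ℂ (fun z => P z * Q z) (closedBall 0 r) :=
    (hP.mul hQ.differentiableOn).mono (closedBall_subset_ball h1)
  have : DiffContOnCl ℂ (fun z => P z * Q z) (ball 0 |r|) := by
    rw [abs_of_pos h0]
    exact (hc.mono closure_ball_subset_closedBall).diffContOnCl
  exact this.circleAverage

lemma key_r (P : ℂ → ℂ) (hP : DifferentiableOn ℂ P (ball (0:ℂ) 1))
    (hpos : ∀ z ∈ ball (0:ℂ) 1 \ {0}, 0 < (P z).re) (X : ℝ) (l1 l2 l3 l4 : ℂ)
    (hX : ∀ u : ℂ, ‖u‖ = 1 → (l1 * u + l2 * u ^ 2 + l3 * u ^ 3 + l4 * u ^ 4).re ≤ X)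
    (r : ℝ) (h0 : 0 < r) (h1 : r < 1) :
    (l1 * (r ^ 1 * taylorCoeff P 1) + l2 * (r ^ 2 * taylorCoeff P 2)
      + l3 * (r ^ 3 * taylorCoeff P 3) + l4 * (r ^ 4 * taylorCoeff P 4)).re
      ≤ 2 * X * (P 0).re := by
  set Q : ℂ → ℂ := fun z => (starRingEnd ℂ) l1 * (z / r) ^ 1 + (starRingEnd ℂ) l2 * (z / r) ^ 2
    + (starRingEnd ℂ) l3 * (z / r) ^ 3 + (starRingEnd ℂ) l4 * (z / r) ^ 4 - 2 * X with hQ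
  have hQd : Differentiable ℂ Q := by rw [hQ]; fun_prop
  have hPc : ContinuousOn P (sphere 0 r) := hP.continuousOn.mono
    (sphere_subset_closedBall.trans (closedBall_subset_ball h1))
  have hne : ∀ z ∈ sphere (0:ℂ) r, z ≠ 0 := by
    intro z hz h; simp [h] at hz; linarith
  have hCI : ∀ (l : ℂ) (k : ℕ), CircleIntegrable (fun z => l • (P z * (r / z) ^ k)) 0 r := by
    intro l k
    apply ContinuousOn.circleIntegrable h0.le
    simp only [smul_eq_mul]
    refine continuousOn_const.mul (hPc.mul ?_)
    apply ContinuousOn.pow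
    exact continuousOn_const.div continuousOn_id hne
  have hCIQ : CircleIntegrable (fun z => P z * Q z) 0 r :=
    ContinuousOn.circleIntegrable h0.le (hPc.mul hQd.continuous.continuousOn)
  set W : ℂ → ℂ := fun z => l1 • (P z * (r / z) ^ 1) + l2 • (P z * (r / z) ^ 2)
    + l3 • (P z * (r / z) ^ 3) + l4 • (P z * (r / z) ^ 4) + P z * Q z with hW
  have i2 : CircleIntegrable (fun z => l1 • (P z * (r / z) ^ 1) + l2 • (P z * (r / z) ^ 2)) 0 r :=
    (hCI l1 1).add (hCI l2 2)
  have i3 : CircleIntegrable (fun z => l1 • (P z * (r / z) ^ 1) + l2 • (P z * (r / z) ^ 2)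
    + l3 • (P z * (r / z) ^ 3)) 0 r := i2.add (hCI l3 3)
  have i4 : CircleIntegrable (fun z => l1 • (P z * (r / z) ^ 1) + l2 • (P z * (r / z) ^ 2)
    + l3 • (P z * (r / z) ^ 3) + l4 • (P z * (r / z) ^ 4)) 0 r := i3.add (hCI l4 4)
  have iW : CircleIntegrable W 0 r := i4.add hCIQ
  have avgW : Real.circleAverage W 0 r = l1 * (r ^ 1 * taylorCoeff P 1)
      + l2 * (r ^ 2 * taylorCoeff P 2)
      + l3 * (r ^ 3 * taylorCoeff P 3) + l4 * (r ^ 4 * taylorCoeff P 4)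
      - 2 * X * P 0 := by
    rw [hW, Real.circleAverage_fun_add i4 hCIQ, Real.circleAverage_fun_add i3 (hCI l4 4),
      Real.circleAverage_fun_add i2 (hCI l3 3), Real.circleAverage_fun_add (hCI l1 1) (hCI l2 2)]
    simp only [Real.circleAverage_fun_smul, avg_coeff P hP r h0 h1, avg_zero P hP r h0 h1 Q hQd]
    simp [hQ]; ring
  have hre : (Real.circleAverage W 0 r).re ≤ 0 := by
    have := Complex.reCLM.circleAverage_comp_comm iW
    simp only [Complex.reCLM_apply] at this
    rw [← this]
    apply Real.circleAverage_mono_on_of_le_circle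
    · exact ⟨Complex.reCLM.integrable_comp iW.1, Complex.reCLM.integrable_comp iW.2⟩
    · intro z hz
      rw [abs_of_pos h0] at hz
      have hz' : ‖z‖ = r := by simpa using hz
      have hz0 := hne z hz
      have hr0 : (r : ℂ) ≠ 0 := by exact_mod_cast h0.ne'
      have hp := hpos z ⟨by simp [hz', h1], hz0⟩
      set u : ℂ := r / z with hu
      have hu1 : ‖u‖ = 1 := by
        rw [hu, norm_div, hz', Complex.norm_real, Real.norm_of_nonneg h0.le, div_self h0.ne']
      have hzu : z / r = (starRingEnd ℂ) u := by
        rw [← Complex.inv_eq_conj hu1, hu, inv_div]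
      have hb := hX u hu1
      set Λ := l1 * u + l2 * u ^ 2 + l3 * u ^ 3 + l4 * u ^ 4 with hΛ
      have hWz : W z = P z * Λ + P z * ((starRingEnd ℂ) Λ - ((2 * X : ℝ) : ℂ)) := by
        simp only [hW, hQ, hzu, hΛ, smul_eq_mul, map_add, map_mul, map_pow, ← hu]
        push_cast; ring
      simp only [Function.comp, Complex.reCLM_apply]
      rw [hWz]
      have : (P z * Λ + P z * ((starRingEnd ℂ) Λ - ((2 * X : ℝ) : ℂ))).re
        = 2 * (P z).re * (Λ.re - X) := by
        simp only [Complex.add_re, Complex.mul_re, Complex.sub_re, Complex.sub_im, Complex.conj_re,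
          Complex.conj_im, Complex.ofReal_re, Complex.ofReal_im]
        ring
      rw [this]
      nlinarith
  rw [avgW] at hre
  have : (2 * (X:ℂ) * P 0).re = 2 * X * (P 0).re := by
    have : (2 * (X:ℂ) * P 0) = ((2 * X : ℝ) : ℂ) * P 0 := by push_cast; ring
    rw [this, Complex.re_ofReal_mul]
  rw [Complex.sub_re, this] at hre
  linarith

lemma key_lemma (P : ℂ → ℂ) (hP : DifferentiableOn ℂ P (ball (0:ℂ) 1))
    (hpos : ∀ z ∈ ball (0:ℂ) 1 \ {0}, 0 < (P z).re) (X : ℝ) (l1 l2 l3 l4 : ℂ)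
    (hX : ∀ u : ℂ, ‖u‖ = 1 → (l1 * u + l2 * u ^ 2 + l3 * u ^ 3 + l4 * u ^ 4).re ≤ X) :
    (l1 * taylorCoeff P 1 + l2 * taylorCoeff P 2
      + l3 * taylorCoeff P 3 + l4 * taylorCoeff P 4).re ≤ 2 * X * (P 0).re := by
  set F : ℝ → ℝ := fun r => (l1 * (r ^ 1 * taylorCoeff P 1) + l2 * (r ^ 2 * taylorCoeff P 2)
      + l3 * (r ^ 3 * taylorCoeff P 3) + l4 * (r ^ 4 * taylorCoeff P 4)).re with hF
  have hc : Continuous F := by rw [hF]; fun_prop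
  have ht : Filter.Tendsto F (nhdsWithin 1 (Set.Iio 1)) (nhds (F 1)) :=
    hc.continuousAt.tendsto.mono_left nhdsWithin_le_nhds
  have := le_of_tendsto ht (b := 2 * X * (P 0).re) (by
    filter_upwards [Ioo_mem_nhdsLT (show (0:ℝ) < 1 by norm_num)] with r hr
    exact key_r P hP hpos X l1 l2 l3 l4 hX r hr.1 hr.2)
  simpa [hF] using this

/-- Real parts bigger than one half: coefficients lie in the hull of `(w, w², w³, w⁴)`. -/
lemma half_lemma (h : ℂ → ℂ) (hd : DifferentiableOn ℂ h (ball (0:ℂ) 1)) (h0 : h 0 = 1)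
    (hpos : ∀ z ∈ ball (0:ℂ) 1, 1 / 2 < (h z).re) (C : ℝ) (l0 l1 l2 l3 l4 : ℂ)
    (hC : ∀ u : ℂ, ‖u‖ = 1 → (l0 + (l1 * u + l2 * u ^ 2 + l3 * u ^ 3 + l4 * u ^ 4)).re ≤ C) :
    (l0 + (l1 * taylorCoeff h 1 + l2 * taylorCoeff h 2
      + l3 * taylorCoeff h 3 + l4 * taylorCoeff h 4)).re ≤ C := by
  have key := key_lemma (fun z => h z - (1/2 : ℂ)) (hd.sub_const _) (by
    intro z hz; have := hpos z hz.1
    have e : (1/2 : ℂ).re = 1/2 := by norm_num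
    rw [Complex.sub_re, e]; linarith) (C - l0.re) l1 l2 l3 l4 (by
    intro u hu; have := hC u hu; rw [Complex.add_re] at this; linarith)
  have ec : ∀ k, taylorCoeff (fun z => h z - (1/2 : ℂ)) (k + 1) = taylorCoeff h (k + 1) := by
    intro k
    unfold taylorCoeff
    have e : deriv (fun z => h z - (1/2 : ℂ)) = deriv h := by
      ext z; exact deriv_sub_const _
    rw [iteratedDeriv_succ', iteratedDeriv_succ', e]
  simp only [ec 0, ec 1, ec 2, ec 3, h0] at key
  norm_num at key
  rw [Complex.add_re]
  simp only [Complex.add_re] at key ⊢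
  norm_num at key ⊢
  linarith

/-- Coefficients of functions with `Re (e^{iθ} p) > 0`, `p 0 = 1`. -/
lemma tilt_lemma (p : ℂ → ℂ) (hd : DifferentiableOn ℂ p (ball (0:ℂ) 1)) (h0 : p 0 = 1) (θ : ℝ)
    (hpos : ∀ z ∈ ball (0:ℂ) 1 \ {0}, 0 < (Complex.exp (θ * I) * p z).re)
    (C : ℝ) (l0 l1 l2 l3 l4 : ℂ)
    (hC : ∀ u : ℂ, ‖u‖ = 1 → (l0 + (1 + Complex.exp (-(2 * θ * I))) *
      (l1 * u + l2 * u ^ 2 + l3 * u ^ 3 + l4 * u ^ 4)).re ≤ C) :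
    (l0 + (l1 * taylorCoeff p 1 + l2 * taylorCoeff p 2
      + l3 * taylorCoeff p 3 + l4 * taylorCoeff p 4)).re ≤ C := by
  set e := Complex.exp (θ * I) with he
  set e' := Complex.exp (-(θ * I)) with he'
  have hee : e' * e = 1 := by rw [he, he', ← Complex.exp_add]; simp
  have hre0 : e.re = Real.cos θ := by rw [he]; exact Complex.exp_ofReal_mul_I_re θ
  have h1c : 1 + Complex.exp (-(2 * θ * I)) = ((2 * Real.cos θ : ℝ) : ℂ) * e' := by
    push_cast
    rw [Complex.two_cos, add_mul, ← Complex.exp_add, he', ← Complex.exp_add]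
    congr 1
    · simp
    · congr 1; ring
  have ec : ∀ k, taylorCoeff (fun z => e * p z) k = e * taylorCoeff p k := by
    intro k
    unfold taylorCoeff
    rw [iteratedDeriv_const_mul_field]
    ring
  have main : ∀ X : ℝ, (∀ u : ℂ, ‖u‖ = 1 →
      (e' * (l1 * u + l2 * u ^ 2 + l3 * u ^ 3 + l4 * u ^ 4)).re ≤ X) →
      (l1 * taylorCoeff p 1 + l2 * taylorCoeff p 2
      + l3 * taylorCoeff p 3 + l4 * taylorCoeff p 4).re ≤ 2 * X * Real.cos θ := by
    intro X hX
    have key := key_lemma (fun z => e * p z) (hd.const_mul e) hpos X (e' * l1) (e' * l2)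
      (e' * l3) (e' * l4) (by
        intro u hu; have := hX u hu
        convert this using 2; ring)
    simp only [ec, h0, mul_one, hre0] at key
    convert key using 2
    linear_combination -(l1 * taylorCoeff p 1 + l2 * taylorCoeff p 2
      + l3 * taylorCoeff p 3 + l4 * taylorCoeff p 4) * hee
  have hcos : 0 ≤ Real.cos θ := by
    have hc : ContinuousAt (fun z => (e * p z).re) 0 := by
      have : ContinuousAt p 0 := hd.continuousOn.continuousAt (ball_mem_nhds _ one_pos)
      exact Complex.continuous_re.continuousAt.comp (continuousAt_const.mul this)
    have ht : Filter.Tendsto (fun z => (e * p z).re) (nhdsWithin 0 {(0:ℂ)}ᶜ)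
      (nhds ((e * p 0).re)) := hc.tendsto.mono_left nhdsWithin_le_nhds
    rw [h0, mul_one, hre0] at ht
    refine ge_of_tendsto ht ?_
    filter_upwards [self_mem_nhdsWithin, mem_nhdsWithin_of_mem_nhds (ball_mem_nhds (0:ℂ) one_pos)]
      with z hz hz1
    exact (hpos z ⟨hz1, hz⟩).le
  rcases hcos.eq_or_lt with hc0 | hc0
  · have hb := main (‖e'‖ * (‖l1‖ + ‖l2‖ + ‖l3‖ + ‖l4‖)) (by
      intro u hu
      refine (Complex.re_le_norm _).trans ?_
      rw [norm_mul]
      gcongr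
      refine (norm_add_le _ _).trans (add_le_add ((norm_add_le _ _).trans
        (add_le_add ((norm_add_le _ _).trans (add_le_add ?_ ?_)) ?_)) ?_) <;> simp [hu])
    have := hC 1 (by simp)
    rw [h1c, ← hc0] at this
    rw [← hc0] at hb
    simp only [Complex.add_re] at hb this ⊢
    simp at this
    linarith
  · have hb := main ((C - l0.re) / (2 * Real.cos θ)) (by
      intro u hu
      have := hC u hu
      rw [h1c, Complex.add_re, mul_assoc, Complex.re_ofReal_mul] at this
      rw [le_div_iff₀ (by positivity)]
      linarith)
    have e3 : 2 * ((C - l0.re) / (2 * Real.cos θ)) * Real.cos θ = C - l0.re := by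
      field_simp
    rw [e3] at hb
    rw [Complex.add_re]; linarith

/-- One-sided derivative sign. -/
lemma deriv_nonpos_of_left (k : ℝ → ℝ) (d : ℝ) (hk : HasDerivAt k d 1) (h1 : k 1 = 0)
    (h : ∀ ρ : ℝ, 0 < ρ → ρ < 1 → 0 ≤ k ρ) : d ≤ 0 := by
  have ht := (hasDerivAt_iff_tendsto_slope.1 hk).mono_left
    (nhdsWithin_mono (1:ℝ) (show Set.Iio (1:ℝ) ⊆ {1}ᶜ from fun x hx => ne_of_lt hx))
  refine le_of_tendsto ht ?_
  filter_upwards [Ioo_mem_nhdsLT (show (0:ℝ) < 1 by norm_num)] with r hr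
  rw [slope_def_field, h1]
  have := h r hr.1 hr.2
  exact div_nonpos_of_nonneg_of_nonpos (by linarith) (by linarith [hr.2])

lemma hasDerivAt_normSq (F : ℝ → ℂ) (F' : ℂ) (t : ℝ) (hF : HasDerivAt F F' t) :
    HasDerivAt (fun s => ‖F s‖ ^ 2) (2 * ((starRingEnd ℂ) (F t) * F').re) t := by
  have := hF.norm_sq
  convert this using 2
  rw [Complex.inner, mul_comm]

/-- The Jack lemma. -/
lemma jack (ω : ℂ → ℂ) (hd : DifferentiableOn ℂ ω (ball (0:ℂ) 1)) (h0 : ω 0 = 0)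
    (z0 : ℂ) (hz : z0 ∈ ball (0:ℂ) 1) (hz0 : z0 ≠ 0)
    (hmax : ∀ z : ℂ, ‖z‖ ≤ ‖z0‖ → ‖ω z‖ ≤ ‖ω z0‖) :
    ((starRingEnd ℂ) (ω z0) * (z0 * deriv ω z0)).im = 0 ∧
    ‖ω z0‖ ^ 2 ≤ ((starRingEnd ℂ) (ω z0) * (z0 * deriv ω z0)).re := by
  have hda : HasDerivAt ω (deriv ω z0) z0 :=
    (hd.differentiableAt (isOpen_ball.mem_nhds hz)).hasDerivAt
  have hr : 0 < ‖z0‖ := norm_pos_iff.2 hz0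
  have hr1 : ‖z0‖ < 1 := by simpa using hz
  constructor
  · have hin : HasDerivAt (fun φ : ℝ => z0 * Complex.exp (φ * I)) (z0 * I) 0 := by
      have h1 : HasDerivAt (fun φ : ℂ => z0 * Complex.exp (φ * I)) (z0 * I) ((0:ℝ):ℂ) := by
        have := ((hasDerivAt_id ((0:ℝ):ℂ)).mul_const I).cexp.const_mul z0
        simpa using this
      exact h1.comp_ofReal
    have hcomp : HasDerivAt (fun φ : ℝ => ω (z0 * Complex.exp (φ * I)))
        (deriv ω z0 * (z0 * I)) 0 := by
      have hda' : HasDerivAt ω (deriv ω z0) (z0 * Complex.exp ((0:ℝ) * I)) := by simpa using hda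
      exact hda'.comp (0:ℝ) hin
    have hN := hasDerivAt_normSq _ _ _ hcomp
    have hloc : IsLocalMax (fun φ : ℝ => ‖ω (z0 * Complex.exp (φ * I))‖ ^ 2) 0 := by
      refine Filter.Eventually.of_forall fun φ => ?_
      have : ‖ω (z0 * Complex.exp (φ * I))‖ ≤ ‖ω z0‖ := by
        apply hmax
        simp [Complex.norm_exp_ofReal_mul_I]
      simpa using pow_le_pow_left₀ (norm_nonneg _) this 2
    have := hloc.hasDerivAt_eq_zero hN
    have e : (starRingEnd ℂ) (ω (z0 * Complex.exp ((0:ℝ) * I))) * (deriv ω z0 * (z0 * I))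
        = ((starRingEnd ℂ) (ω z0) * (z0 * deriv ω z0)) * I := by
      simp; ring
    rw [e, Complex.mul_I_re] at this
    linarith
  · have hin : HasDerivAt (fun ρ : ℝ => (ρ : ℂ) * z0) z0 1 := by
      have h1 : HasDerivAt (fun ρ : ℂ => ρ * z0) z0 ((1:ℝ):ℂ) := by
        simpa using (hasDerivAt_id ((1:ℝ):ℂ)).mul_const z0
      exact h1.comp_ofReal
    have hcomp : HasDerivAt (fun ρ : ℝ => ω (ρ * z0)) (deriv ω z0 * z0) 1 := by
      have hda' : HasDerivAt ω (deriv ω z0) (((1:ℝ):ℂ) * z0) := by simpa using hda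
      exact hda'.comp (1:ℝ) hin
    have hN := hasDerivAt_normSq _ _ _ hcomp
    have hk : HasDerivAt (fun ρ : ℝ => ‖ω z0‖ ^ 2 * ρ ^ 2 - ‖ω (ρ * z0)‖ ^ 2)
      (‖ω z0‖ ^ 2 * 2 - 2 * ((starRingEnd ℂ) (ω (((1:ℝ):ℂ) * z0)) * (deriv ω z0 * z0)).re) 1 := by
      have h2 : HasDerivAt (fun ρ : ℝ => ‖ω z0‖ ^ 2 * ρ ^ 2) (‖ω z0‖ ^ 2 * 2) 1 := by
        simpa using (hasDerivAt_pow 2 (1:ℝ)).const_mul (‖ω z0‖ ^ 2)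
      exact h2.sub hN
    have := deriv_nonpos_of_left _ _ hk (by simp) (by
      intro ρ hρ hρ1
      have hn : ‖(ρ : ℂ) * z0‖ = ρ * ‖z0‖ := by
        rw [norm_mul, Complex.norm_real, Real.norm_of_nonneg hρ.le]
      have hs := Complex.dist_le_div_mul_dist_of_mapsTo_ball (f := ω) (c := 0) (R₁ := ‖z0‖)
        (R₂ := ‖ω z0‖) (z := ρ * z0) (hd.mono (ball_subset_ball hr1.le)) (by
          intro z hz
          simp only [h0, mem_closedBall, dist_zero_right]
          exact hmax z (by simpa using (mem_ball_zero_iff.1 hz).le)) (by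
          rw [mem_ball_zero_iff, hn]; nlinarith)
      rw [h0, dist_zero_right, dist_zero_right, hn] at hs
      have e : ‖ω z0‖ / ‖z0‖ * (ρ * ‖z0‖) = ‖ω z0‖ * ρ := by field_simp
      rw [e] at hs
      have := pow_le_pow_left₀ (norm_nonneg _) hs 2
      nlinarith)
    have e : (starRingEnd ℂ) (ω (((1:ℝ):ℂ) * z0)) * (deriv ω z0 * z0)
        = (starRingEnd ℂ) (ω z0) * (z0 * deriv ω z0) := by
      rw [Complex.ofReal_one, one_mul, mul_comm z0]
    rw [e] at this
    linarith

/-- Algebraic end of the Marx-Strohhäcker argument. -/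
lemma ms_alg (w D : ℂ) (hw : 1 ≤ ‖w‖) (hne : 1 - w ≠ 0)
    (him : ((starRingEnd ℂ) w * D).im = 0) (hre : ‖w‖ ^ 2 ≤ ((starRingEnd ℂ) w * D).re) :
    (1 + 2 * D / (1 - w)).re ≤ 0 := by
  have hw0 : w ≠ 0 := by intro h; simp [h] at hw; linarith
  have hn : 0 < Complex.normSq (1 - w) := Complex.normSq_pos.2 hne
  rw [Complex.sq_norm] at hre
  have hw2 : 1 ≤ Complex.normSq w := by rw [← Complex.sq_norm]; nlinarith
  rw [Complex.normSq_apply] at *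
  simp only [Complex.mul_im, Complex.mul_re, Complex.conj_re, Complex.conj_im, Complex.sub_re,
    Complex.sub_im, Complex.one_re, Complex.one_im] at *
  simp only [Complex.add_re, Complex.div_re, Complex.mul_re, Complex.mul_im, Complex.normSq_apply,
    Complex.sub_re, Complex.sub_im, Complex.one_re, Complex.one_im, Complex.re_ofNat,
    Complex.im_ofNat]
  generalize w.re = a at *
  generalize w.im = b at *
  generalize D.re = p at *
  generalize D.im = q at *
  rw [← add_div, ← sub_nonneg, zero_sub, neg_nonneg] 
  set m := a * p + b * q with hm
  have h1 : m = a * p - -b * q := by rw [hm]; ring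
  rw [← h1] at hre
  set n := a * a + b * b with hnn
  -- n * D = m * w
  have hp : n * p = m * a := by rw [hm, hnn]; linear_combination -b * him
  have hq : n * q = m * b := by rw [hm, hnn]; linear_combination a * him
  have hN : 0 < (1 - a) * (1 - a) + (0 - b) * (0 - b) := hn
  have key : (1 - a) * (1 - a) + (0 - b) * (0 - b) + 2 * (p * (1 - a) - q * b) ≤ 0 := by
    have e : n * ((1 - a) * (1 - a) + (0 - b) * (0 - b) + 2 * (p * (1 - a) - q * b))
      = n * (1 - 2 * a + n) + 2 * m * (a - n) := by
      have : n * (p * (1 - a) - q * b) = m * (a - n) := by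
        linear_combination (1 - a) * hp - b * hq + m * hnn
      rw [mul_add, ← mul_assoc, mul_comm n 2, mul_assoc, this, hnn]; ring
    have h2 : a - n ≤ 0 := by nlinarith [sq_nonneg (a - 1), sq_nonneg b]
    have h3 : n * (1 - 2 * a + n) + 2 * m * (a - n) ≤ 0 := by nlinarith
    rw [← e] at h3
    by_contra hcon
    push Not at hcon
    nlinarith [mul_pos (show 0 < n by linarith) hcon]
  have : 1 + ((2 * p - 0 * q) * (1 - a) + (2 * q + 0 * p) * (0 - b)) /
      ((1 - a) * (1 - a) + (0 - b) * (0 - b)) =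
     ((1 - a) * (1 - a) + (0 - b) * (0 - b) + 2 * (p * (1 - a) - q * b)) /
      ((1 - a) * (1 - a) + (0 - b) * (0 - b)) := by
    rw [add_div _ (2 * (p * (1 - a) - q * b)), div_self hN.ne']
    congr 2; ring
  rw [this]
  exact div_nonpos_of_nonpos_of_nonneg key hN.le

/-- Marx-Strohhäcker: a starlike function is `z h(z)^2` with `Re h > 1/2`. -/
lemma starlike_sqrt (g : ℂ → ℂ) (hg : IsStarlikeFn g) :
    ∃ h : ℂ → ℂ, DifferentiableOn ℂ h (ball (0:ℂ) 1) ∧ h 0 = 1 ∧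
      (∀ z ∈ ball (0:ℂ) 1, 1 / 2 < (h z).re) ∧
      ∀ z ∈ ball (0:ℂ) 1, g z = z * (h z * h z) := by
  obtain ⟨hd, hg0, hg1, hpos⟩ := hg
  set G := dslope g 0 with hG
  have hb : ball (0:ℂ) 1 ∈ nhds (0:ℂ) := ball_mem_nhds _ one_pos
  have hGd : DifferentiableOn ℂ G (ball (0:ℂ) 1) :=
    (Complex.differentiableOn_dslope hb).2 hd
  have hgG : ∀ z, g z = z * G z := by
    intro z
    have := sub_smul_dslope g 0 z
    simp [hg0] at this
    rw [← this]
  have hG0 : G 0 = 1 := by rw [hG, dslope_same, hg1]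
  have hGne : ∀ z ∈ ball (0:ℂ) 1, G z ≠ 0 := by
    intro z hz h
    by_cases hz0 : z = 0
    · rw [hz0, hG0] at h; exact one_ne_zero h
    · have := hpos z ⟨hz, hz0⟩
      rw [hgG z, h] at this
      simp at this
  have hGda : ∀ z ∈ ball (0:ℂ) 1, HasDerivAt G (deriv G z) z := fun z hz =>
    (hGd.differentiableAt (isOpen_ball.mem_nhds hz)).hasDerivAt
  have hG'd : DifferentiableOn ℂ (deriv G) (ball (0:ℂ) 1) := hGd.deriv isOpen_ball
  obtain ⟨L, hL0, hL⟩ := (hG'd.div hGd hGne).isExactOn_ball.with_val_at 0 0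
  have hLd : DifferentiableOn ℂ L (ball (0:ℂ) 1) := fun z hz =>
    (hL z hz).differentiableAt.differentiableWithinAt
  -- G = exp L
  have hGL : ∀ z ∈ ball (0:ℂ) 1, G z * Complex.exp (-L z) = 1 := by
    intro z hz
    have hder : ∀ w ∈ ball (0:ℂ) 1,
        HasDerivAt (fun w => G w * Complex.exp (-L w)) 0 w := by
      intro w hw
      have hLw : HasDerivAt L (deriv G w / G w) w := hL w hw
      have hne := hGne w hw
      have h2 : HasDerivAt (fun w => -L w) (-(deriv G w / G w)) w := hLw.neg
      have h1 : HasDerivAt (fun w => G w * Complex.exp (-L w))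
          (deriv G w * Complex.exp (-L w)
            + G w * (Complex.exp (-L w) * -(deriv G w / G w))) w :=
        (hGda w hw).mul h2.cexp
      refine h1.congr_deriv ?_
      have h3 : G w * (Complex.exp (-L w) * -(deriv G w / G w))
          = -(deriv G w * Complex.exp (-L w)) := by
        field_simp
      rw [h3]; ring
    have := (convex_ball (0:ℂ) 1).is_const_of_fderivWithin_eq_zero (𝕜 := ℂ)
      (f := fun w => G w * Complex.exp (-L w))
      (fun w hw => (hder w hw).differentiableAt.differentiableWithinAt) (by
        intro w hw
        rw [fderivWithin_of_isOpen isOpen_ball hw]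
        have h2 := (hder w hw).hasFDerivAt.fderiv
        rw [h2]; ext; simp) hz (mem_ball_self one_pos)
    simpa [hG0, hL0] using this
  set ω : ℂ → ℂ := fun z => 1 - Complex.exp (-L z / 2) with hω
  have hωd : DifferentiableOn ℂ ω (ball (0:ℂ) 1) := by
    rw [hω]
    exact (differentiableOn_const _).sub ((hLd.neg.div_const 2).cexp)
  have hω0 : ω 0 = 0 := by simp [hω, hL0]
  have hωlt : ∀ z ∈ ball (0:ℂ) 1, ‖ω z‖ < 1 := by
    intro z1 hz1
    by_contra hcon
    push Not at hcon
    have hz1' : ‖z1‖ < 1 := by simpa using hz1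
    obtain ⟨z0, hz0, hmax⟩ := (isCompact_closedBall (0:ℂ) ‖z1‖).exists_isMaxOn
      ⟨z1, by simp⟩ ((hωd.continuousOn.mono (closedBall_subset_ball hz1')).norm)
    have hz0' : ‖z0‖ ≤ ‖z1‖ := by simpa using hz0
    have hM : 1 ≤ ‖ω z0‖ := hcon.trans (hmax (show z1 ∈ closedBall (0:ℂ) ‖z1‖ by simp))
    have hzb : z0 ∈ ball (0:ℂ) 1 := by simpa using lt_of_le_of_lt hz0' hz1'
    have hz00 : z0 ≠ 0 := by
      intro h; rw [h, hω0] at hM; simp at hM; linarith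
    obtain ⟨him, hre⟩ := jack ω hωd hω0 z0 hzb hz00 (by
      intro z hz
      exact hmax (show z ∈ closedBall (0:ℂ) ‖z1‖ by simpa using hz.trans hz0'))
    have hv : 1 - ω z0 = Complex.exp (-L z0 / 2) := by simp [hω]
    have hvne : 1 - ω z0 ≠ 0 := by rw [hv]; exact Complex.exp_ne_zero _
    have hc := ms_alg (ω z0) (z0 * deriv ω z0) hM hvne him hre
    have hp := hpos z0 ⟨hzb, hz00⟩
    have hω' : HasDerivAt ω (Complex.exp (-L z0 / 2) * (deriv G z0 / G z0) / 2) z0 := by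
      have hLw : HasDerivAt L (deriv G z0 / G z0) z0 := hL z0 hzb
      have h2 : HasDerivAt (fun z => -L z / 2) (-(deriv G z0 / G z0) / 2) z0 :=
        hLw.neg.div_const 2
      have h1 : HasDerivAt ω (-(Complex.exp (-L z0 / 2) * (-(deriv G z0 / G z0) / 2))) z0 :=
        h2.cexp.const_sub 1
      exact h1.congr_deriv (by ring)
    have hg' : deriv g z0 = G z0 + z0 * deriv G z0 := by
      have h1 : HasDerivAt g (1 * G z0 + z0 * deriv G z0) z0 := by
        have := (hasDerivAt_id z0).mul (hGda z0 hzb)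
        have e : g = id * G := by ext z; simp [hgG z]
        rw [e]; simpa using this
      rw [h1.deriv]; ring
    have hGz := hGne z0 hzb
    have e : z0 * deriv g z0 / g z0 = 1 + 2 * (z0 * deriv ω z0) / (1 - ω z0) := by
      rw [hω'.deriv, hv, hg', hgG z0]
      have := Complex.exp_ne_zero (-L z0 / 2)
      field_simp
    rw [e] at hp
    linarith
  refine ⟨fun z => Complex.exp (L z / 2), (hLd.div_const 2).cexp, by simp [hL0], ?_, ?_⟩
  · intro z hz
    have hlt := hωlt z hz
    set h := Complex.exp (L z / 2) with hh
    have hne : h ≠ 0 := Complex.exp_ne_zero _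
    have hωz : ω z = 1 - h⁻¹ := by
      simp only [hω, hh, ← Complex.exp_neg]; congr 2; ring
    have e : ω z * h = h - 1 := by rw [hωz]; field_simp
    have h1 : ‖h - 1‖ < ‖h‖ := by
      rw [← e, norm_mul]
      have := norm_pos_iff.2 hne
      nlinarith
    have h2 := pow_lt_pow_left₀ h1 (norm_nonneg _) (two_ne_zero)
    rw [Complex.sq_norm, Complex.sq_norm, Complex.normSq_apply, Complex.normSq_apply] at h2
    simp at h2
    nlinarith
  · intro z hz
    have h1 := hGL z hz
    rw [hgG z, ← Complex.exp_add, show L z / 2 + L z / 2 = L z by ring]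
    congr 1
    rw [Complex.exp_neg] at h1
    have := Complex.exp_ne_zero (L z)
    field_simp at h1
    exact h1

lemma taylor_mul (a b : ℂ → ℂ) (ha : DifferentiableOn ℂ a (ball (0:ℂ) 1))
    (hb : DifferentiableOn ℂ b (ball (0:ℂ) 1)) (n : ℕ) :
    taylorCoeff (fun z => a z * b z) n
      = ∑ i ∈ Finset.range (n + 1), taylorCoeff a i * taylorCoeff b (n - i) := by
  have hmem : ball (0:ℂ) 1 ∈ nhds (0:ℂ) := ball_mem_nhds _ one_pos
  unfold taylorCoeff
  rw [iteratedDeriv_fun_mul (ha.analyticAt hmem).contDiffAt (hb.analyticAt hmem).contDiffAt,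
    Finset.sum_div]
  refine Finset.sum_congr rfl fun i hi => ?_
  have hi' : i ≤ n := Nat.lt_succ_iff.1 (Finset.mem_range.1 hi)
  have hc := Nat.choose_mul_factorial_mul_factorial hi'
  have hc' : (n.choose i : ℂ) * (i.factorial : ℂ) * ((n - i).factorial : ℂ)
    = (n.factorial : ℂ) := by exact_mod_cast hc
  have h1 : (i.factorial : ℂ) ≠ 0 := by exact_mod_cast i.factorial_ne_zero
  have h2 : ((n - i).factorial : ℂ) ≠ 0 := by exact_mod_cast (n - i).factorial_ne_zero
  have h3 : (n.factorial : ℂ) ≠ 0 := by exact_mod_cast n.factorial_ne_zero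
  field_simp
  rw [← hc']
  ring

lemma taylor_zero (a : ℂ → ℂ) : taylorCoeff a 0 = a 0 := by simp [taylorCoeff]

lemma taylor_deriv (f : ℂ → ℂ) (n : ℕ) :
    taylorCoeff (deriv f) n = (n + 1) * taylorCoeff f (n + 1) := by
  unfold taylorCoeff
  rw [← iteratedDeriv_succ', Nat.factorial_succ]
  push_cast
  have h3 : (n.factorial : ℂ) ≠ 0 := by exact_mod_cast n.factorial_ne_zero
  have h4 : (n : ℂ) + 1 ≠ 0 := by exact_mod_cast n.succ_ne_zero
  field_simp

/-- The linear functional bound. -/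
lemma functional_bound (f : ℂ → ℂ) (hf : IsCloseToConvex f) (η : ℂ) (hη : ‖η‖ = 1) (t : ℝ) :
    (2 * t * η * taylorCoeff f 3 - η ^ 2 * taylorCoeff f 5).re
      ≤ t ^ 2 + (5 + 3 * Real.sqrt 3) / 2 := by
  obtain ⟨hd, hf0, hf1, θ, g, hg, hpos⟩ := hf
  obtain ⟨h, hhd, hh0, hhre, hgh⟩ := starlike_sqrt g hg
  have hmem : ball (0:ℂ) 1 ∈ nhds (0:ℂ) := ball_mem_nhds _ one_pos
  have hhne : ∀ z ∈ ball (0:ℂ) 1, h z ≠ 0 := by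
    intro z hz h0
    have := hhre z hz
    rw [h0] at this; norm_num at this
  have hhh : DifferentiableOn ℂ (fun z => h z * h z) (ball (0:ℂ) 1) := hhd.mul hhd
  have hd' : DifferentiableOn ℂ (deriv f) (ball (0:ℂ) 1) := hd.deriv isOpen_ball
  set p : ℂ → ℂ := fun z => deriv f z / (h z * h z) with hp
  have hpd : DifferentiableOn ℂ p (ball (0:ℂ) 1) :=
    hd'.div hhh (fun z hz => mul_ne_zero (hhne z hz) (hhne z hz))
  have hp0 : p 0 = 1 := by simp [hp, hf1, hh0]
  have hppos : ∀ z ∈ ball (0:ℂ) 1 \ {0}, 0 < (Complex.exp (θ * I) * p z).re := by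
    intro z hz
    have h1 := hpos z hz
    have hz0 : z ≠ 0 := hz.2
    have hne := hhne z hz.1
    rw [hgh z hz.1] at h1
    convert h1 using 2
    simp only [hp]
    field_simp
  have heq : ∀ n, taylorCoeff (deriv f) n = taylorCoeff (fun z => (h z * h z) * p z) n := by
    intro n
    unfold taylorCoeff
    congr 1
    apply Filter.EventuallyEq.iteratedDeriv_eq
    filter_upwards [hmem] with z hz
    have hne := hhne z hz
    simp only [hp]
    field_simp
  have c2 := (taylor_deriv f 2).symm.trans ((heq 2).trans (taylor_mul _ p hhh hpd 2))
  have c4 := (taylor_deriv f 4).symm.trans ((heq 4).trans (taylor_mul _ p hhh hpd 4))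
  simp only [taylor_mul h h hhd hhd] at c2 c4
  simp only [Finset.sum_range_succ, Finset.sum_range_zero, Nat.reduceSub, Nat.reduceAdd,
    taylor_zero, hh0, hp0, Nat.sub_zero, Nat.sub_self] at c2 c4
  push_cast at c2 c4
  have hform : 2 * t * η * taylorCoeff f 3 - η ^ 2 * taylorCoeff f 5
      = triForm (2 * t * η / 3) (-η ^ 2 / 5) (taylorCoeff h 1) (taylorCoeff h 2) (taylorCoeff h 3)
        (taylorCoeff h 4) (taylorCoeff h 1) (taylorCoeff h 2) (taylorCoeff h 3) (taylorCoeff h 4)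
        (taylorCoeff p 1) (taylorCoeff p 2) (taylorCoeff p 3) (taylorCoeff p 4) := by
    unfold triForm
    linear_combination (2 * t * η / 3) * c2 + (-η ^ 2 / 5) * c4
  rw [hform]
  set α : ℂ := 2 * t * η / 3 with hα
  set β : ℂ := -η ^ 2 / 5 with hβ
  set C : ℝ := t ^ 2 + (5 + 3 * Real.sqrt 3) / 2 with hC
  have lin1 : ∀ x1 x2 x3 x4 y1 y2 y3 y4 p1 p2 p3 p4 : ℂ,
      triForm α β x1 x2 x3 x4 y1 y2 y3 y4 p1 p2 p3 p4 =
      (α * (y2 + y1 * p1 + p2) + β * (y4 + y3 * p1 + y2 * p2 + y1 * p3 + p4)) +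
      ((α * (y1 + p1) + β * (y3 + y2 * p1 + y1 * p2 + p3)) * x1
        + (α + β * (y2 + y1 * p1 + p2)) * x2 + (β * (y1 + p1)) * x3 + β * x4) := by
    intros; unfold triForm; ring
  have symm1 : ∀ x1 x2 x3 x4 y1 y2 y3 y4 p1 p2 p3 p4 : ℂ,
      triForm α β x1 x2 x3 x4 y1 y2 y3 y4 p1 p2 p3 p4 =
      triForm α β y1 y2 y3 y4 x1 x2 x3 x4 p1 p2 p3 p4 := by
    intros; unfold triForm; ring
  have lin3 : ∀ x1 x2 x3 x4 y1 y2 y3 y4 p1 p2 p3 p4 : ℂ,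
      triForm α β x1 x2 x3 x4 y1 y2 y3 y4 p1 p2 p3 p4 =
      (α * (x2 + x1 * y1 + y2) + β * (x4 + x3 * y1 + x2 * y2 + x1 * y3 + y4)) +
      ((α * (x1 + y1) + β * (x3 + x2 * y1 + x1 * y2 + y3)) * p1
        + (α + β * (x2 + x1 * y1 + y2)) * p2 + (β * (x1 + y1)) * p3 + β * p4) := by
    intros; unfold triForm; ring
  rw [lin1]
  refine half_lemma h hhd hh0 hhre C _ _ _ _ _ fun w hw => ?_
  rw [← lin1, symm1, lin1]
  refine half_lemma h hhd hh0 hhre C _ _ _ _ _ fun z hz => ?_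
  rw [← lin1, lin3]
  refine tilt_lemma p hpd hp0 θ hppos C _ _ _ _ _ fun u hu => ?_
  set c := Complex.exp (-(2 * θ * I)) with hc
  have hc1 : ‖c‖ = 1 := by
    rw [hc, show -(2 * (θ:ℂ) * I) = ((-(2 * θ) : ℝ) : ℂ) * I by push_cast; ring,
      Complex.norm_exp_ofReal_mul_I]
  have fin := tri_le α β c u z w C hu hz hw (by
    intro v hv
    have := kernel_bound η hη t (-(c * u)) v (by simp [hc1, hu]) hv
    convert this using 2
    unfold kerForm
    rw [hα, hβ]; ring)
  rw [lin3] at fin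
  convert fin using 2
  ring

theorem zalcman_closeToConvex_n3
    (f : ℂ → ℂ) (hf : IsCloseToConvex f) :
    ‖(taylorCoeff f 3) ^ 2 - taylorCoeff f 5‖ ≤ (5 + 3 * Real.sqrt 3) / 2 := by
  have hs : 0 ≤ Real.sqrt 3 := Real.sqrt_nonneg 3
  set D := (taylorCoeff f 3) ^ 2 - taylorCoeff f 5 with hD
  set η := Complex.exp (((-(Complex.arg D / 2) : ℝ) : ℂ) * I) with hη
  have hη1 : ‖η‖ = 1 := Complex.norm_exp_ofReal_mul_I _
  have hηD : η ^ 2 * D = (‖D‖ : ℂ) := by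
    have h1 : η ^ 2 = Complex.exp (-(Complex.arg D * I)) := by
      rw [hη, ← Complex.exp_nat_mul]; congr 1; push_cast; ring
    have h2 := Complex.norm_mul_exp_arg_mul_I D
    calc η ^ 2 * D = Complex.exp (-(Complex.arg D * I)) *
          (‖D‖ * Complex.exp (Complex.arg D * I)) := by rw [h1, h2]
      _ = ‖D‖ * (Complex.exp (-(Complex.arg D * I)) * Complex.exp (Complex.arg D * I)) := by ring
      _ = ‖D‖ := by rw [← Complex.exp_add]; simp
  have hre : ‖D‖ = ((η * taylorCoeff f 3) ^ 2 - η ^ 2 * taylorCoeff f 5).re := by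
    have : (η * taylorCoeff f 3) ^ 2 - η ^ 2 * taylorCoeff f 5 = (‖D‖ : ℂ) := by
      rw [← hηD, hD]; ring
    rw [this, Complex.ofReal_re]
  have hb := functional_bound f hf η hη1 (η * taylorCoeff f 3).re
  have e : 2 * ((η * taylorCoeff f 3).re : ℂ) * η * taylorCoeff f 3
      = ((2 * (η * taylorCoeff f 3).re : ℝ) : ℂ) * (η * taylorCoeff f 3) := by push_cast; ring
  rw [e, Complex.sub_re, Complex.re_ofReal_mul] at hb
  rw [Complex.sub_re, pow_two (η * taylorCoeff f 3), Complex.mul_re (η * taylorCoeff f 3)] at hre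
  rw [hre]
  nlinarith [sq_nonneg (η * taylorCoeff f 3).im]
end
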